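/- arXiv:1501.07375 — 2 statements merged into one kernel-verified Lean document; each statement's English description precedes it below -/
import Mathlib

section
/- Suppose X is a c-quasiconvex metric space, G ⊊ X is a b-uniform domain, and γ is a (ν,h)-solid arc in G with endpoints x, y. Then there is a constant μ₃ = μ₃(b,c,ν,h) ≥ 1 such that diam(γ) ≤ max{μ₃|x−y|, 2(e^h − 1)·min{δ_G(x), δ_G(y)}}. -/
open Metric Set Filter

section QHDefs

variable {X : Type*} [MetricSpace X] {Y : Type*} [MetricSpace Y]

/-- Distance to the boundary of `G`. -/
noncomputable def bdist (G : Set X) (z : X) : ℝ := Metric.infDist z (frontier G)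

/-- A unit-speed (1-Lipschitz, arclength-parametrized) rectifiable curve in `G`
from `x` to `y`, parametrized on `[0, L]`, where `L` is its length. -/
structure CurveIn (G : Set X) (γ : ℝ → X) (L : ℝ) (x y : X) : Prop where
  nonneg : 0 ≤ L
  lip : LipschitzOnWith 1 γ (Set.Icc 0 L)
  source : γ 0 = x
  target : γ L = y
  mem : ∀ t ∈ Set.Icc 0 L, γ t ∈ G

/-- Quasihyperbolic length of the subcurve `γ|[s,t]` in `G`: `∫_γ |dz|/δ_G(z)`. -/
noncomputable def qhLengthOn (G : Set X) (γ : ℝ → X) (s t : ℝ) : ℝ :=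
  ∫ u in s..t, 1 / bdist G (γ u)

/-- Quasihyperbolic length of a curve parametrized on `[0,L]`. -/
noncomputable def qhLength (G : Set X) (γ : ℝ → X) (L : ℝ) : ℝ := qhLengthOn G γ 0 L

/-- Quasihyperbolic distance in `G`. -/
noncomputable def qhDist (G : Set X) (x y : X) : ℝ :=
  sInf {l | ∃ γ L, CurveIn G γ L x y ∧ qhLength G γ L = l}

/-- `X` is a `c`-quasiconvex metric space. -/
def QCSpace (c : ℝ) (X : Type*) [MetricSpace X] : Prop :=
  ∀ x y : X, ∃ γ L, CurveIn (Set.univ : Set X) γ L x y ∧ L ≤ c * dist x y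

/-- A set `G` is `c`-quasiconvex. -/
def QCSet (c : ℝ) (G : Set X) : Prop :=
  ∀ x ∈ G, ∀ y ∈ G, ∃ γ L, CurveIn G γ L x y ∧ L ≤ c * dist x y

/-- A domain: a nonempty connected open set. -/
def IsDomainSet (G : Set X) : Prop := IsOpen G ∧ IsConnected G

/-- A proper domain: a nonempty connected open set, different from the whole space. -/
def IsProperDomain (G : Set X) : Prop := IsOpen G ∧ IsConnected G ∧ G ≠ Set.univ

/-- `G` is an `a`-John domain: each pair of points is joined by a rectifiable arc
satisfying the cone condition. -/
def IsJohn (a : ℝ) (G : Set X) : Prop :=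
  ∀ x ∈ G, ∀ y ∈ G, ∃ γ L, CurveIn G γ L x y ∧
    ∀ t ∈ Set.Icc 0 L, min t (L - t) ≤ a * bdist G (γ t)

/-- `G` is a `b`-uniform domain: each pair of points is joined by a double `b`-cone arc. -/
def IsUniform (b : ℝ) (G : Set X) : Prop :=
  ∀ x ∈ G, ∀ y ∈ G, ∃ γ L, CurveIn G γ L x y ∧ L ≤ b * dist x y ∧
    ∀ t ∈ Set.Icc 0 L, min t (L - t) ≤ b * bdist G (γ t)

/-- `G` is a locally `a`-John domain. -/
def LocallyJohn (a : ℝ) (G : Set X) : Prop :=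
  ∀ x ∈ G, ∀ r : ℝ, 0 < r → r ≤ bdist G x → IsJohn a (Metric.ball x r)

/-- The `h`-coarse quasihyperbolic length of the subcurve `γ|[s,t]` in `G`:
the supremum of sums `Σ k_G(x_{j-1},x_j)` over `h`-coarse sequences of successive
points of the arc (with the convention that it is `0` if there are none). -/
noncomputable def coarseQHLength (G : Set X) (γ : ℝ → X) (s t h : ℝ) : ℝ :=
  sSup {S | ∃ n : ℕ, 0 < n ∧ ∃ u : ℕ → ℝ,
    (∀ i < n, u i ≤ u (i + 1)) ∧ (∀ i ≤ n, u i ∈ Set.Icc s t) ∧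
    (∀ i < n, h ≤ qhDist G (γ (u i)) (γ (u (i + 1)))) ∧
    S = ∑ i ∈ Finset.range n, qhDist G (γ (u i)) (γ (u (i + 1)))}

/-- `γ` (parametrized on `[0,L]`) is a `(ν,h)`-solid arc in `G`. -/
def SolidArc (G : Set X) (γ : ℝ → X) (L ν h : ℝ) : Prop :=
  ∀ s t : ℝ, 0 ≤ s → s ≤ t → t ≤ L →
    coarseQHLength G γ s t h ≤ ν * qhDist G (γ s) (γ t)

/-- `γ` (parametrized on `[0,L]`) is an `ε`-short arc in `G`. -/
def ShortArc (G : Set X) (γ : ℝ → X) (L ε : ℝ) : Prop :=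
  qhLength G γ L ≤ qhDist G (γ 0) (γ L) + ε

/-- A map is weakly `H`-quasisymmetric. -/
def WeakQS (H : ℝ) (f : X → Y) : Prop :=
  ∀ x a b : X, dist x a ≤ dist x b → dist (f x) (f a) ≤ H * dist (f x) (f b)

/-- Image of a subset `D ⊆ G` under a homeomorphism `f : G ≃ₜ G'`, as a subset of `Y`. -/
def imSet {G : Set X} {G' : Set Y} (f : ↥G ≃ₜ ↥G') (D : Set X) : Set Y :=
  Subtype.val '' (f '' (Subtype.val ⁻¹' D))

/-- `f : G ≃ₜ G'` is `M`-quasihyperbolic. -/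
def MQH (M : ℝ) {G : Set X} {G' : Set Y} (f : ↥G ≃ₜ ↥G') : Prop :=
  ∀ x y : ↥G, (1 / M) * qhDist G ↑x ↑y ≤ qhDist G' ↑(f x) ↑(f y) ∧
    qhDist G' ↑(f x) ↑(f y) ≤ M * qhDist G ↑x ↑y

/-- `f : G ≃ₜ G'` is `C`-coarsely `M`-quasihyperbolic. -/
def CQH (M C : ℝ) {G : Set X} {G' : Set Y} (f : ↥G ≃ₜ ↥G') : Prop :=
  ∀ x y : ↥G, (qhDist G ↑x ↑y - C) / M ≤ qhDist G' ↑(f x) ↑(f y) ∧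
    qhDist G' ↑(f x) ↑(f y) ≤ M * qhDist G ↑x ↑y + C

/-- `f : G ≃ₜ G'` is freely `φ`-quasiconformal: in every subdomain, the
quasihyperbolic distances of `f` and `f⁻¹` are controlled by `φ`. -/
def FQC (φ : ℝ → ℝ) {G : Set X} {G' : Set Y} (f : ↥G ≃ₜ ↥G') : Prop :=
  ∀ D : Set X, ∀ hD : D ⊆ G, IsDomainSet D →
    ∀ x : X, ∀ hx : x ∈ D, ∀ y : X, ∀ hy : y ∈ D,
      qhDist (imSet f D) ↑(f ⟨x, hD hx⟩) ↑(f ⟨y, hD hy⟩) ≤ φ (qhDist D x y) ∧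
      qhDist D x y ≤ φ (qhDist (imSet f D) ↑(f ⟨x, hD hx⟩) ↑(f ⟨y, hD hy⟩))

end QHDefs

/-!
Quasihyperbolic distance grows at most logarithmically in a uniform domain, and at least
logarithmically in any domain.  If `b|x - y| ≤ min{δ(x), δ(y)}`, then `k(x, y)` is at most a
multiple of `|x - y| / min{δ(x), δ(y)}`; solidity gives `k(p, z) ≤ max{h, ν k(x, y)}` for `z ∈ γ`
and an endpoint `p`, and the lower bound for `k` turns this into a bound for `|p - z|`.

Otherwise `δ(x), δ(y) ≤ T := (b + 1)|x - y|`.  On a layer of `γ`, where `δ ≤ M` with `δ ≥ M/2` at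
both ends, a part of diameter `D` contains about `D/M` points with consecutive quasihyperbolic
distances at least `max{h, 1}`, so `D/M` is at most logarithmic in `D/M`, i.e. bounded.  Summing a
geometric series over layers bounds the parts of `γ` before the first and after the last point
with `δ = T`, and between those two points the argument of the first case applies.
-/

section Real

lemma le_of_le_add_mul_log {E a β r : ℝ} (ha : 0 ≤ a) (hβ : 0 ≤ β) (hr : 0 ≤ r)
    (h : r ≤ E + a * Real.log (1 + β * r)) :
    r ≤ 2 * (E + a * Real.log (1 + 2 * a * β)) := by
  set B := 1 + 2 * a * β with hB
  have hB_pos : 0 < B := by positivity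
  have hlog : Real.log (1 + β * r) ≤ (1 + β * r) / B - 1 + Real.log B := by
    have := Real.log_le_sub_one_of_pos (div_pos (by positivity : 0 < 1 + β * r) hB_pos)
    rw [Real.log_div (by positivity) hB_pos.ne'] at this
    linarith
  have hhalf : a * ((1 + β * r) / B - 1) ≤ r / 2 := by
    rw [div_sub_one hB_pos.ne', ← mul_div_assoc, div_le_iff₀ hB_pos, hB]
    nlinarith [mul_nonneg (mul_nonneg ha ha) hβ, mul_nonneg (mul_nonneg ha hβ) hr]
  linarith [mul_le_mul_of_nonneg_left hlog ha]

lemma exp_mul_sub_one_le {a q : ℝ} (hq₀ : 0 ≤ q) (hq₁ : q ≤ 1) :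
    Real.exp (a * q) - 1 ≤ (Real.exp a - 1) * q := by
  have := convexOn_exp.2 (mem_univ 0) (mem_univ a) (sub_nonneg.2 hq₁) hq₀ (by ring)
  simp only [smul_eq_mul, mul_zero, zero_add, Real.exp_zero] at this
  rw [mul_comm a]
  linarith

lemma intervalIntegrable_one_div_add {m ℓ : ℝ} (hm : 0 < m) (hℓ : 0 ≤ ℓ) :
    IntervalIntegrable (fun u => 1 / (m + u)) MeasureTheory.volume 0 ℓ := by
  apply ContinuousOn.intervalIntegrable
  rw [uIcc_of_le hℓ]
  exact continuousOn_const.div (by fun_prop) fun u hu => by linarith [hu.1]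

lemma integral_one_div_add {m ℓ : ℝ} (hm : 0 < m) (hℓ : 0 ≤ ℓ) :
    ∫ u in (0 : ℝ)..ℓ, 1 / (m + u) = Real.log (1 + ℓ / m) := by
  rw [intervalIntegral.integral_comp_add_left (fun u => 1 / u),
    integral_one_div_of_pos (by linarith) (by linarith), add_zero, add_div, div_self hm.ne']

lemma exists_first_level {g : ℝ → ℝ} {s t T : ℝ} (hst : s ≤ t) (hg : ContinuousOn g (Icc s t))
    (hs : g s ≤ T) (ht : T ≤ g t) :
    ∃ σ ∈ Icc s t, g σ = T ∧ ∀ u ∈ Icc s σ, g u ≤ T := by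
  have hcompact : IsCompact (Icc s t ∩ g ⁻¹' {T}) :=
    isCompact_Icc.of_isClosed_subset
      (hg.preimage_isClosed_of_isClosed isClosed_Icc isClosed_singleton) inter_subset_left
  obtain ⟨σ, ⟨hσ, hgσ⟩, hleast⟩ :=
    hcompact.exists_isLeast (intermediate_value_Icc hst hg ⟨hs, ht⟩)
  refine ⟨σ, hσ, hgσ, fun u hu => ?_⟩
  by_contra! hlt
  obtain ⟨v, hv, hgv⟩ := intermediate_value_Icc hu.1
    (hg.mono (Icc_subset_Icc_right (hu.2.trans hσ.2))) ⟨hs, hlt.le⟩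
  have hσv : σ ≤ v := hleast ⟨⟨hv.1, hv.2.trans (hu.2.trans hσ.2)⟩, hgv⟩
  rw [hu.2.antisymm (hσv.trans hv.2)] at hlt
  exact hlt.ne' hgσ

lemma exists_last_level {g : ℝ → ℝ} {s t T : ℝ} (hst : s ≤ t) (hg : ContinuousOn g (Icc s t))
    (hs : T ≤ g s) (ht : g t ≤ T) :
    ∃ τ ∈ Icc s t, g τ = T ∧ ∀ u ∈ Icc τ t, g u ≤ T := by
  obtain ⟨σ, hσ, hgσ, hle⟩ := exists_first_level (g := fun u => g (-u)) (neg_le_neg hst)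
    (hg.comp continuousOn_neg fun u hu => ⟨le_neg_of_le_neg hu.2, neg_le_of_neg_le hu.1⟩)
    (by simpa using ht) (by simpa using hs)
  refine ⟨-σ, ⟨le_neg_of_le_neg hσ.2, neg_le_of_neg_le hσ.1⟩, hgσ, fun u hu => ?_⟩
  simpa using hle (-u) ⟨neg_le_neg hu.2, neg_le_of_neg_le hu.1⟩

lemma exists_seq_arithmetic_levels {f : ℝ → ℝ} {s ρ : ℝ} (hρ : 0 ≤ ρ) (n : ℕ) {w : ℝ}
    (hsw : s ≤ w) (hf : ContinuousOn f (Icc s w)) (hfw : f s + n * ρ ≤ f w) :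
    ∃ u : ℕ → ℝ, (∀ i < n, u i ≤ u (i + 1)) ∧ (∀ i ≤ n, u i ∈ Icc s w) ∧
      ∀ i ≤ n, f (u i) = f s + i * ρ := by
  induction n generalizing w with
  | zero => exact ⟨fun _ => s, by simp, fun _ _ => ⟨le_rfl, hsw⟩, by simp⟩
  | succ n ih =>
    obtain ⟨v, hv, hfv⟩ := intermediate_value_Icc hsw hf
      (show f s + (n + 1 : ℕ) * ρ ∈ Icc (f s) (f w) from
        ⟨le_add_of_nonneg_right (by positivity), hfw⟩)
    obtain ⟨u, hu, hmem, hval⟩ := ih hv.1 (hf.mono (Icc_subset_Icc_right hv.2))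
      (by rw [hfv]; push_cast; linarith)
    refine ⟨fun i => if i ≤ n then u i else v, fun i hi => ?_, fun i _ => ?_, fun i hi => ?_⟩
    · rcases Nat.lt_succ_iff_lt_or_eq.mp hi with hin | rfl
      · simpa [hin.le, Nat.succ_le_of_lt hin] using hu i hin
      · simpa using (hmem i le_rfl).2
    · by_cases hin : i ≤ n
      · simpa [hin] using ⟨(hmem i hin).1, (hmem i hin).2.trans hv.2⟩
      · simpa [hin] using hv
    · by_cases hin : i ≤ n
      · simpa [hin] using hval i hin
      · obtain rfl : i = n + 1 := by omega
        simpa using hfv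

end Real

section Layers

variable {X : Type*} [MetricSpace X] {f : ℝ → X} {g : ℝ → ℝ} {L C T : ℝ}

/-- The layer condition with constant `C` for a curve `f` on `[0, L]` and a size function `g`
along it (the boundary distance, in the application): a subcurve on which `g ≤ M`, and at whose
two endpoints `M / 2 ≤ g`, has diameter at most `C * M`. The bound is on pairwise distances, so
that no boundedness is needed to make use of it. -/
def LayerBounded (f : ℝ → X) (g : ℝ → ℝ) (L C : ℝ) : Prop :=
  ∀ s t M : ℝ, 0 ≤ s → s ≤ t → t ≤ L → (∀ u ∈ Icc s t, g u ≤ M) →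
    M / 2 ≤ g s → M / 2 ≤ g t → ∀ u ∈ Icc s t, ∀ v ∈ Icc s t, dist (f u) (f v) ≤ C * M

lemma LayerBounded.reverse (hf : LayerBounded f g L C) :
    LayerBounded (fun u => f (L - u)) (fun u => g (L - u)) L C := by
  intro s t M hs hst ht hM hMs hMt u hu v hv
  refine hf (L - t) (L - s) M (by linarith) (by linarith) (by linarith) (fun w hw => ?_) hMt hMs
    (L - u) ⟨by linarith [hu.2], by linarith [hu.1]⟩
    (L - v) ⟨by linarith [hv.2], by linarith [hv.1]⟩
  simpa using hM (L - w) ⟨by linarith [hw.2], by linarith [hw.1]⟩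

lemma LayerBounded.const_nonneg (hf : LayerBounded f g L C) (hL : 0 ≤ L) (hg₀ : 0 < g 0) :
    0 ≤ C := by
  have := hf 0 0 (g 0) le_rfl le_rfl hL (by simp) (half_le_self hg₀.le) (half_le_self hg₀.le)
    0 (by simp) 0 (by simp)
  rw [dist_self] at this
  exact nonneg_of_mul_nonneg_left this hg₀

lemma LayerBounded.dist_le_of_forall_le_left (hf : LayerBounded f g L C)
    (hg : ContinuousOn g (Icc 0 L)) (hg₀ : 0 < g 0) {τ : ℝ} (hτ : τ ∈ Icc 0 L)
    (hmax : ∀ u ∈ Icc 0 τ, g u ≤ g τ) {u : ℝ} (hu : u ∈ Icc 0 τ) :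
    dist (f u) (f τ) ≤ 2 * C * g τ := by
  obtain ⟨n, hn⟩ : ∃ n : ℕ, g τ ≤ 2 ^ n * g 0 := by
    obtain ⟨n, hn⟩ := pow_unbounded_of_one_lt (g τ / g 0) one_lt_two
    exact ⟨n, ((div_lt_iff₀ hg₀).1 hn).le⟩
  induction n generalizing τ u with
  | zero =>
    have hpos : 0 < g τ := hg₀.trans_le (hmax 0 ⟨le_rfl, hτ.1⟩)
    have hlayer := hf 0 τ (g τ) le_rfl hτ.1 hτ.2 hmax (by linarith) (by linarith)
    linarith [hlayer u hu τ ⟨hτ.1, le_rfl⟩, hlayer u hu u hu, dist_self (f u)]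
  | succ n ih =>
    have hpos : 0 < g τ := hg₀.trans_le (hmax 0 ⟨le_rfl, hτ.1⟩)
    rcases le_total (g τ / 2) (g 0) with hle | hle
    · have hlayer := hf 0 τ (g τ) le_rfl hτ.1 hτ.2 hmax hle (by linarith)
      linarith [hlayer u hu τ ⟨hτ.1, le_rfl⟩, hlayer u hu u hu, dist_self (f u)]
    obtain ⟨σ, hσ, hgσ, hσmax⟩ := exists_first_level hτ.1
      (hg.mono (Icc_subset_Icc_right hτ.2)) hle (by linarith)
    have hlayer := hf σ τ (g τ) hσ.1 hσ.2 hτ.2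
      (fun v hv => hmax v ⟨hσ.1.trans hv.1, hv.2⟩) hgσ.ge (by linarith)
    have hστ : dist (f σ) (f τ) ≤ C * g τ := hlayer σ ⟨le_rfl, hσ.2⟩ τ ⟨hσ.2, le_rfl⟩
    rcases le_total σ u with hσu | huσ
    · linarith [hlayer u ⟨hσu, hu.2⟩ τ ⟨hσ.2, le_rfl⟩, dist_nonneg.trans hστ]
    · have huσ : dist (f u) (f σ) ≤ 2 * C * g σ :=
        ih ⟨hσ.1, hσ.2.trans hτ.2⟩ (by rwa [hgσ]) ⟨hu.1, huσ⟩
          (by rw [hgσ]; rw [pow_succ] at hn; linarith)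
      rw [hgσ] at huσ
      linarith [dist_triangle (f u) (f σ) (f τ)]

lemma LayerBounded.dist_le_of_forall_le_right (hf : LayerBounded f g L C)
    (hg : ContinuousOn g (Icc 0 L)) (hgL : 0 < g L) {τ : ℝ} (hτ : τ ∈ Icc 0 L)
    (hmax : ∀ u ∈ Icc τ L, g u ≤ g τ) {u : ℝ} (hu : u ∈ Icc τ L) :
    dist (f u) (f τ) ≤ 2 * C * g τ := by
  have hrev : MapsTo (fun v => L - v) (Icc 0 L) (Icc 0 L) := fun v hv =>
    ⟨by linarith [hv.2], by linarith [hv.1]⟩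
  have := hf.reverse.dist_le_of_forall_le_left (hg.comp (by fun_prop) hrev) (by simpa using hgL)
    (hrev hτ) (fun v hv => by
      simpa using hmax (L - v) ⟨by linarith [hv.2], by linarith [hv.1]⟩)
    (u := L - u) ⟨by linarith [hu.2], by linarith [hu.1]⟩
  simpa using this

lemma LayerBounded.dist_le_or_exists_levels (hf : LayerBounded f g L C)
    (hg : ContinuousOn g (Icc 0 L)) (hL : 0 ≤ L) (hg₀ : 0 < g 0) (hgL : 0 < g L)
    (h₀ : g 0 ≤ T) (hT : g L ≤ T) :
    (∃ τ ∈ Icc 0 L, ∀ u ∈ Icc 0 L, dist (f u) (f τ) ≤ 2 * C * T) ∨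
    ∃ σ ∈ Icc 0 L, ∃ τ ∈ Icc σ L, g σ = T ∧ g τ = T ∧
      (∀ u ∈ Icc 0 σ, dist (f u) (f σ) ≤ 2 * C * T) ∧
      ∀ u ∈ Icc τ L, dist (f u) (f τ) ≤ 2 * C * T := by
  obtain ⟨w, hw, hmax⟩ := isCompact_Icc.exists_isMaxOn ⟨0, le_rfl, hL⟩ hg
  rcases le_total (g w) T with hwT | hTw
  · have hC : 0 ≤ C := hf.const_nonneg hL hg₀
    refine .inl ⟨w, hw, fun u hu => le_trans ?_ (by gcongr : 2 * C * g w ≤ 2 * C * T)⟩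
    rcases le_total u w with huw | hwu
    · exact hf.dist_le_of_forall_le_left hg hg₀ hw
        (fun v hv => hmax ⟨hv.1, hv.2.trans hw.2⟩) ⟨hu.1, huw⟩
    · exact hf.dist_le_of_forall_le_right hg hgL hw
        (fun v hv => hmax ⟨hw.1.trans hv.1, hv.2⟩) ⟨hwu, hu.2⟩
  · obtain ⟨σ, hσ, hgσ, hσle⟩ := exists_first_level hw.1
      (hg.mono (Icc_subset_Icc_right hw.2)) h₀ hTw
    obtain ⟨τ, hτ, hgτ, hτle⟩ := exists_last_level hw.2
      (hg.mono (Icc_subset_Icc_left hw.1)) hTw hT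
    have hσL : σ ∈ Icc 0 L := ⟨hσ.1, hσ.2.trans hw.2⟩
    refine .inr ⟨σ, hσL, τ, ⟨hσ.2.trans hτ.1, hτ.2⟩, hgσ, hgτ, fun u hu => ?_, fun u hu => ?_⟩
    · simpa only [hgσ] using
        hf.dist_le_of_forall_le_left hg hg₀ hσL (by rwa [hgσ]) hu
    · simpa only [hgτ] using
        hf.dist_le_of_forall_le_right hg hgL ⟨hw.1.trans hτ.1, hτ.2⟩ (by rwa [hgτ]) hu

end Layers

section BoundaryDistance

variable {X : Type*} [MetricSpace X] {G : Set X}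

lemma QCSpace.preconnectedSpace {c : ℝ} (hX : QCSpace c X) : PreconnectedSpace X := by
  refine ⟨isPreconnected_of_forall_pair fun x _ y _ => ?_⟩
  obtain ⟨γ, L, hγ, -⟩ := hX x y
  exact ⟨γ '' Icc 0 L, subset_univ _, ⟨0, left_mem_Icc.2 hγ.nonneg, hγ.source⟩,
    ⟨L, right_mem_Icc.2 hγ.nonneg, hγ.target⟩, isPreconnected_Icc.image γ hγ.lip.continuousOn⟩

lemma bdist_pos (hG : IsOpen G) (hfr : (frontier G).Nonempty) {z : X} (hz : z ∈ G) :
    0 < bdist G z :=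
  (isClosed_frontier.notMem_iff_infDist_pos hfr).1 fun hz' =>
    (hG.inter_frontier_eq ▸ (⟨hz, hz'⟩ : z ∈ G ∩ frontier G) : z ∈ (∅ : Set X))

lemma bdist_nonneg (z : X) : 0 ≤ bdist G z :=
  infDist_nonneg

lemma bdist_le_bdist_add_dist (z w : X) : bdist G z ≤ bdist G w + dist z w :=
  infDist_le_infDist_add_dist

end BoundaryDistance

section Quasihyperbolic

variable {X : Type*} [MetricSpace X] {G : Set X} {γ : ℝ → X} {L : ℝ} {x y : X}

lemma CurveIn.source_mem (hγ : CurveIn G γ L x y) : x ∈ G :=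
  hγ.source ▸ hγ.mem 0 (left_mem_Icc.2 hγ.nonneg)

lemma CurveIn.target_mem (hγ : CurveIn G γ L x y) : y ∈ G :=
  hγ.target ▸ hγ.mem L (right_mem_Icc.2 hγ.nonneg)

lemma CurveIn.dist_le (hγ : CurveIn G γ L x y) {s t : ℝ} (hs : 0 ≤ s) (hst : s ≤ t)
    (ht : t ≤ L) : dist (γ s) (γ t) ≤ t - s := by
  have := hγ.lip.dist_le_mul s ⟨hs, hst.trans ht⟩ t ⟨hs.trans hst, ht⟩
  rwa [NNReal.coe_one, one_mul, dist_comm s t, Real.dist_eq, abs_of_nonneg (sub_nonneg.2 hst)]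
    at this

lemma CurveIn.subcurve (hγ : CurveIn G γ L x y) {s t : ℝ} (hs : 0 ≤ s) (hst : s ≤ t)
    (ht : t ≤ L) : CurveIn G (fun u => γ (u + s)) (t - s) (γ s) (γ t) where
  nonneg := sub_nonneg.2 hst
  lip := LipschitzOnWith.of_dist_le_mul fun u hu v hv => by
    simpa using hγ.lip.dist_le_mul (u + s) ⟨by linarith [hu.1], by linarith [hu.2]⟩
      (v + s) ⟨by linarith [hv.1], by linarith [hv.2]⟩
  source := by simp
  target := by simp
  mem u hu := hγ.mem _ ⟨by linarith [hu.1], by linarith [hu.2]⟩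

lemma CurveIn.reverse (hγ : CurveIn G γ L x y) : CurveIn G (fun u => γ (L - u)) L y x where
  nonneg := hγ.nonneg
  lip := LipschitzOnWith.of_dist_le_mul fun u hu v hv => by
    simpa only [dist_sub_left] using
      hγ.lip.dist_le_mul (L - u) ⟨by linarith [hu.2], by linarith [hu.1]⟩
        (L - v) ⟨by linarith [hv.2], by linarith [hv.1]⟩
  source := by simpa using hγ.target
  target := by simpa using hγ.source
  mem u hu := hγ.mem _ ⟨by linarith [hu.2], by linarith [hu.1]⟩

lemma CurveIn.exists_curveIn (hγ : CurveIn G γ L x y) {s t : ℝ} (hs : s ∈ Icc 0 L)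
    (ht : t ∈ Icc 0 L) : ∃ σ ℓ, CurveIn G σ ℓ (γ s) (γ t) := by
  rcases le_total s t with hst | hts
  · exact ⟨_, _, hγ.subcurve hs.1 hst ht.2⟩
  · exact ⟨_, _, (hγ.subcurve ht.1 hts hs.2).reverse⟩

lemma CurveIn.continuousOn_bdist (hγ : CurveIn G γ L x y) :
    ContinuousOn (fun u => bdist G (γ u)) (Icc 0 L) :=
  (continuous_infDist_pt _).comp_continuousOn hγ.lip.continuousOn

lemma CurveIn.intervalIntegrable_one_div_bdist (hG : ∀ z ∈ G, 0 < bdist G z)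
    (hγ : CurveIn G γ L x y) {s t : ℝ} (hs : 0 ≤ s) (hst : s ≤ t) (ht : t ≤ L) :
    IntervalIntegrable (fun u => 1 / bdist G (γ u)) MeasureTheory.volume s t := by
  have hsub : Icc s t ⊆ Icc 0 L := Icc_subset_Icc hs ht
  apply ContinuousOn.intervalIntegrable
  rw [uIcc_of_le hst]
  exact continuousOn_const.div (hγ.continuousOn_bdist.mono hsub)
    fun u hu => (hG _ (hγ.mem u (hsub hu))).ne'

lemma qhLengthOn_nonneg {s t : ℝ} (hst : s ≤ t) : 0 ≤ qhLengthOn G γ s t :=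
  intervalIntegral.integral_nonneg hst fun _ _ => one_div_nonneg.2 (bdist_nonneg _)

lemma qhLength_reverse (G : Set X) (γ : ℝ → X) (L : ℝ) :
    qhLength G (fun u => γ (L - u)) L = qhLength G γ L := by
  simp only [qhLength, qhLengthOn,
    intervalIntegral.integral_comp_sub_left (fun u => 1 / bdist G (γ u)), sub_self, sub_zero]

lemma qhDist_comm (G : Set X) (x y : X) : qhDist G x y = qhDist G y x := by
  unfold qhDist
  congr 1
  ext l
  constructor <;> rintro ⟨γ, L, hγ, rfl⟩ <;>
    exact ⟨_, L, hγ.reverse, qhLength_reverse G γ L⟩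

lemma qhDist_nonneg (x y : X) : 0 ≤ qhDist G x y := by
  apply Real.sInf_nonneg
  rintro _ ⟨γ, L, hγ, rfl⟩
  exact qhLengthOn_nonneg hγ.nonneg

lemma CurveIn.qhDist_le (hγ : CurveIn G γ L x y) : qhDist G x y ≤ qhLength G γ L := by
  refine csInf_le ⟨0, ?_⟩ ⟨γ, L, hγ, rfl⟩
  rintro _ ⟨σ, ℓ, hσ, rfl⟩
  exact qhLengthOn_nonneg hσ.nonneg

lemma CurveIn.qhDist_le_qhLengthOn (hγ : CurveIn G γ L x y) {s t : ℝ} (hs : 0 ≤ s)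
    (hst : s ≤ t) (ht : t ≤ L) : qhDist G (γ s) (γ t) ≤ qhLengthOn G γ s t := by
  refine (hγ.subcurve hs hst ht).qhDist_le.trans_eq ?_
  simp only [qhLength, qhLengthOn,
    intervalIntegral.integral_comp_add_right (fun u => 1 / bdist G (γ u)), zero_add,
    sub_add_cancel]

lemma CurveIn.log_le_qhLength (hG : ∀ z ∈ G, 0 < bdist G z) (hγ : CurveIn G γ L x y) :
    Real.log (1 + dist x y / bdist G x) ≤ qhLength G γ L := by
  have hx : 0 < bdist G x := hG x hγ.source_mem
  have hdist : dist x y ≤ L := by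
    simpa [hγ.source, hγ.target] using hγ.dist_le le_rfl hγ.nonneg le_rfl
  calc Real.log (1 + dist x y / bdist G x)
      ≤ Real.log (1 + L / bdist G x) := by gcongr
    _ = ∫ u in (0 : ℝ)..L, 1 / (bdist G x + u) := (integral_one_div_add hx hγ.nonneg).symm
    _ ≤ qhLength G γ L := by
      refine intervalIntegral.integral_mono_on hγ.nonneg
        (intervalIntegrable_one_div_add hx hγ.nonneg)
        (hγ.intervalIntegrable_one_div_bdist hG le_rfl hγ.nonneg le_rfl) fun u hu =>
        one_div_le_one_div_of_le (hG _ (hγ.mem u hu)) ?_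
      have hxu := hγ.dist_le le_rfl hu.1 hu.2
      rw [hγ.source, dist_comm] at hxu
      linarith [bdist_le_bdist_add_dist (G := G) (γ u) x]

lemma CurveIn.dist_le_exp_qhDist (hG : ∀ z ∈ G, 0 < bdist G z) (hγ : CurveIn G γ L x y) :
    dist x y ≤ (Real.exp (qhDist G x y) - 1) * bdist G x := by
  have hx : 0 < bdist G x := hG x hγ.source_mem
  have hlog : Real.log (1 + dist x y / bdist G x) ≤ qhDist G x y := by
    refine le_csInf ⟨_, γ, L, hγ, rfl⟩ ?_
    rintro _ ⟨σ, ℓ, hσ, rfl⟩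
    exact hσ.log_le_qhLength hG
  rw [Real.log_le_iff_le_exp (by positivity)] at hlog
  rw [← div_le_iff₀ hx]
  linarith

lemma CurveIn.le_qhDist_of_mul_le_dist (hG : ∀ z ∈ G, 0 < bdist G z) (hγ : CurveIn G γ L x y)
    {H M : ℝ} (hM : bdist G x ≤ M) (hdist : (Real.exp H - 1) * M ≤ dist x y) :
    H ≤ qhDist G x y := by
  have hexp : (Real.exp H - 1) * M ≤ (Real.exp (qhDist G x y) - 1) * M := by
    refine hdist.trans ((hγ.dist_le_exp_qhDist hG).trans ?_)
    gcongr
    exact sub_nonneg.2 (Real.one_le_exp (qhDist_nonneg x y))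
  have := le_of_mul_le_mul_right hexp ((hG x hγ.source_mem).trans_le hM)
  exact Real.exp_le_exp.1 (by linarith)

lemma CurveIn.min_bdist_add_min_le {b t : ℝ} (hγ : CurveIn G γ L x y) (ht : t ∈ Icc 0 L)
    (hcone : min t (L - t) ≤ b * bdist G (γ t)) :
    min (bdist G x) (bdist G y) + min t (L - t) ≤ (2 * b + 1) * bdist G (γ t) := by
  suffices min (bdist G x) (bdist G y) ≤ bdist G (γ t) + min t (L - t) by linarith
  rcases le_total t (L - t) with hle | hle
  · have hxt := hγ.dist_le le_rfl ht.1 ht.2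
    rw [hγ.source] at hxt
    rw [min_eq_left hle]
    linarith [bdist_le_bdist_add_dist (G := G) x (γ t), min_le_left (bdist G x) (bdist G y)]
  · have hty := hγ.dist_le ht.1 ht.2 le_rfl
    rw [hγ.target, dist_comm] at hty
    rw [min_eq_right hle]
    linarith [bdist_le_bdist_add_dist (G := G) y (γ t), min_le_right (bdist G x) (bdist G y)]

lemma CurveIn.qhLength_le_log {b : ℝ} (hb : 0 ≤ b) (hG : ∀ z ∈ G, 0 < bdist G z)
    (hγ : CurveIn G γ L x y)
    (hcone : ∀ t ∈ Icc 0 L, min t (L - t) ≤ b * bdist G (γ t)) :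
    qhLength G γ L ≤ (4 * b + 2) * Real.log (1 + L / min (bdist G x) (bdist G y)) := by
  set m := min (bdist G x) (bdist G y)
  have hm : 0 < m := lt_min (hG x hγ.source_mem) (hG y hγ.target_mem)
  have hI := intervalIntegrable_one_div_add hm hγ.nonneg
  have hI' : IntervalIntegrable (fun u => 1 / (m + (L - u))) MeasureTheory.volume 0 L := by
    simpa using (hI.comp_sub_left L).symm
  have hbound : ∀ u ∈ Icc 0 L,
      1 / bdist G (γ u) ≤ (2 * b + 1) * (1 / (m + u) + 1 / (m + (L - u))) := by
    intro u hu
    have hu₀ : 0 < m + u := by linarith [hu.1]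
    have hu₁ : 0 < m + (L - u) := by linarith [hu.2]
    have hmin : 0 < m + min u (L - u) := by rw [← min_add_add_left]; exact lt_min hu₀ hu₁
    calc 1 / bdist G (γ u)
        ≤ (2 * b + 1) * (1 / (m + min u (L - u))) := by
          rw [mul_one_div, div_le_div_iff₀ (hG _ (hγ.mem u hu)) hmin, one_mul]
          exact hγ.min_bdist_add_min_le hu (hcone u hu)
      _ ≤ (2 * b + 1) * (1 / (m + u) + 1 / (m + (L - u))) := by
          gcongr
          rcases min_choice u (L - u) with h | h <;> rw [h]
          · exact le_add_of_nonneg_right (one_div_pos.2 hu₁).le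
          · exact le_add_of_nonneg_left (one_div_pos.2 hu₀).le
  calc qhLength G γ L
      ≤ ∫ u in (0 : ℝ)..L, (2 * b + 1) * (1 / (m + u) + 1 / (m + (L - u))) :=
        intervalIntegral.integral_mono_on hγ.nonneg
          (hγ.intervalIntegrable_one_div_bdist hG le_rfl hγ.nonneg le_rfl)
          ((hI.add hI').const_mul _) hbound
    _ = (4 * b + 2) * Real.log (1 + L / m) := by
        rw [intervalIntegral.integral_const_mul, intervalIntegral.integral_add hI hI',
          intervalIntegral.integral_comp_sub_left (fun u => 1 / (m + u)), sub_self, sub_zero,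
          integral_one_div_add hm hγ.nonneg]
        ring

lemma IsUniform.qhDist_le_log {b : ℝ} (hb : 0 ≤ b) (hG : ∀ z ∈ G, 0 < bdist G z)
    (hU : IsUniform b G) (hx : x ∈ G) (hy : y ∈ G) :
    qhDist G x y ≤
      (4 * b + 2) * Real.log (1 + b * dist x y / min (bdist G x) (bdist G y)) := by
  obtain ⟨γ, L, hγ, hL, hcone⟩ := hU x hx y hy
  have hm : 0 < min (bdist G x) (bdist G y) := lt_min (hG x hx) (hG y hy)
  refine hγ.qhDist_le.trans ((hγ.qhLength_le_log hb hG hcone).trans ?_)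
  have := hγ.nonneg
  gcongr

lemma IsUniform.qhDist_le_div {b : ℝ} (hb : 0 ≤ b) (hG : ∀ z ∈ G, 0 < bdist G z)
    (hU : IsUniform b G) (hx : x ∈ G) (hy : y ∈ G) :
    qhDist G x y ≤ (4 * b + 2) * (b * dist x y / min (bdist G x) (bdist G y)) := by
  have hm : 0 < min (bdist G x) (bdist G y) := lt_min (hG x hx) (hG y hy)
  have hlog := Real.log_le_sub_one_of_pos
    (by positivity : 0 < 1 + b * dist x y / min (bdist G x) (bdist G y))
  refine (hU.qhDist_le_log hb hG hx hy).trans ?_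
  gcongr
  linarith

end Quasihyperbolic

section SolidArcs

variable {X : Type*} [MetricSpace X] {G : Set X} {γ : ℝ → X} {L b ν h : ℝ} {x y : X}

lemma CurveIn.sum_qhDist_le_qhLengthOn (hG : ∀ z ∈ G, 0 < bdist G z) (hγ : CurveIn G γ L x y)
    {s t : ℝ} (hs : 0 ≤ s) (ht : t ≤ L) {n : ℕ} {u : ℕ → ℝ} (hu : ∀ i < n, u i ≤ u (i + 1))
    (hmem : ∀ i ≤ n, u i ∈ Icc s t) :
    ∑ i ∈ Finset.range n, qhDist G (γ (u i)) (γ (u (i + 1))) ≤ qhLengthOn G γ s t := by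
  have hu₀ : ∀ i ≤ n, 0 ≤ u i := fun i hi => hs.trans (hmem i hi).1
  have huL : ∀ i ≤ n, u i ≤ L := fun i hi => (hmem i hi).2.trans ht
  have hu_le : u 0 ≤ u n := by
    rw [← sub_nonneg, ← Finset.sum_range_sub]
    exact Finset.sum_nonneg fun i hi => sub_nonneg.2 (hu i (Finset.mem_range.1 hi))
  have hs₀ := hmem 0 (Nat.zero_le n)
  have htn := hmem n le_rfl
  calc ∑ i ∈ Finset.range n, qhDist G (γ (u i)) (γ (u (i + 1)))
      ≤ ∑ i ∈ Finset.range n, qhLengthOn G γ (u i) (u (i + 1)) :=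
        Finset.sum_le_sum fun i hi => by
          have hi := Finset.mem_range.1 hi
          exact hγ.qhDist_le_qhLengthOn (hu₀ i hi.le) (hu i hi) (huL (i + 1) hi)
    _ = qhLengthOn G γ (u 0) (u n) :=
        intervalIntegral.sum_integral_adjacent_intervals fun i hi =>
          hγ.intervalIntegrable_one_div_bdist hG (hu₀ i hi.le) (hu i hi) (huL (i + 1) hi)
    _ ≤ qhLengthOn G γ s t :=
        intervalIntegral.integral_mono_interval hs₀.1 hu_le htn.2
          (.of_forall fun _ => one_div_nonneg.2 (bdist_nonneg _))
          (hγ.intervalIntegrable_one_div_bdist hG hs (hs₀.1.trans hs₀.2) ht)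

lemma SolidArc.sum_qhDist_le (hG : ∀ z ∈ G, 0 < bdist G z) (hγ : CurveIn G γ L x y)
    (hsolid : SolidArc G γ L ν h) {s t : ℝ} (hs : 0 ≤ s) (hst : s ≤ t) (ht : t ≤ L) {n : ℕ}
    (hn : 0 < n) {u : ℕ → ℝ} (hu : ∀ i < n, u i ≤ u (i + 1))
    (hmem : ∀ i ≤ n, u i ∈ Icc s t)
    (hcoarse : ∀ i < n, h ≤ qhDist G (γ (u i)) (γ (u (i + 1)))) :
    ∑ i ∈ Finset.range n, qhDist G (γ (u i)) (γ (u (i + 1))) ≤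
      ν * qhDist G (γ s) (γ t) := by
  refine le_trans ?_ (hsolid s t hs hst ht)
  refine le_csSup ⟨qhLengthOn G γ s t, ?_⟩ ⟨n, hn, u, hu, hmem, hcoarse, rfl⟩
  rintro _ ⟨k, -, v, hv, hvmem, -, rfl⟩
  exact hγ.sum_qhDist_le_qhLengthOn hG hs ht hv hvmem

lemma SolidArc.qhDist_le_max (hG : ∀ z ∈ G, 0 < bdist G z) (hγ : CurveIn G γ L x y)
    (hsolid : SolidArc G γ L ν h) {s t u v : ℝ} (hs : 0 ≤ s) (ht : t ≤ L)
    (hu : u ∈ Icc s t) (hv : v ∈ Icc s t) :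
    qhDist G (γ u) (γ v) ≤ max h (ν * qhDist G (γ s) (γ t)) := by
  wlog huv : u ≤ v generalizing u v
  · rw [qhDist_comm]
    exact this hv hu (le_of_not_ge huv)
  rcases le_total (qhDist G (γ u) (γ v)) h with hle | hle
  · exact le_max_of_le_left hle
  · refine le_max_of_le_right ?_
    have := hsolid.sum_qhDist_le hG hγ hs (hu.1.trans hu.2) ht one_pos
      (u := fun i => if i = 0 then u else v) (by simpa using huv)
      (fun i _ => by split_ifs <;> assumption) (by simpa using hle)
    simpa using this

lemma SolidArc.dist_le_exp_max (hG : ∀ z ∈ G, 0 < bdist G z) (hγ : CurveIn G γ L x y)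
    (hsolid : SolidArc G γ L ν h) {s t u v : ℝ} (hs : 0 ≤ s) (ht : t ≤ L)
    (hu : u ∈ Icc s t) (hv : v ∈ Icc s t) :
    dist (γ u) (γ v) ≤
      (Real.exp (max h (ν * qhDist G (γ s) (γ t))) - 1) * bdist G (γ u) := by
  have hsub : Icc s t ⊆ Icc 0 L := Icc_subset_Icc hs ht
  obtain ⟨σ, ℓ, hσ⟩ := hγ.exists_curveIn (hsub hu) (hsub hv)
  refine (hσ.dist_le_exp_qhDist hG).trans ?_
  gcongr
  · exact bdist_nonneg _
  · exact hsolid.qhDist_le_max hG hγ hs ht hu hv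

lemma SolidArc.natCast_mul_le_of_le_dist (hG : ∀ z ∈ G, 0 < bdist G z)
    (hγ : CurveIn G γ L x y) (hsolid : SolidArc G γ L ν h) {s t M : ℝ} (hs : 0 ≤ s)
    (ht : t ≤ L) (hM : ∀ u ∈ Icc s t, bdist G (γ u) ≤ M) {H : ℝ} (hH : 0 ≤ H) (hhH : h ≤ H)
    {u v : ℝ} (hsu : s ≤ u) (huv : u ≤ v) (hvt : v ≤ t) {n : ℕ} (hn : 0 < n)
    (hdist : n * ((Real.exp H - 1) * M) ≤ dist (γ u) (γ v)) :
    n * H ≤ ν * qhDist G (γ s) (γ t) := by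
  have hsub : Icc s t ⊆ Icc 0 L := Icc_subset_Icc hs ht
  have huvs : Icc u v ⊆ Icc s t := Icc_subset_Icc hsu hvt
  have hu : u ∈ Icc s t := huvs (left_mem_Icc.2 huv)
  have hMpos : 0 < M := (hG _ (hγ.mem u (hsub hu))).trans_le (hM u hu)
  have hcont : ContinuousOn (fun w => dist (γ u) (γ w)) (Icc u v) :=
    (continuous_const.dist continuous_id).comp_continuousOn
      (hγ.lip.continuousOn.mono (huvs.trans hsub))
  obtain ⟨w, hw, hmem, hval⟩ := exists_seq_arithmetic_levels
    (mul_nonneg (sub_nonneg.2 (Real.one_le_exp hH)) hMpos.le) n huv hcont (by simpa using hdist)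
  simp only [dist_self, zero_add] at hval
  have hstep : ∀ i < n, H ≤ qhDist G (γ (w i)) (γ (w (i + 1))) := by
    intro i hi
    have hi₀ := huvs (hmem i hi.le)
    have hi₁ := huvs (hmem (i + 1) hi)
    obtain ⟨σ, ℓ, hσ⟩ := hγ.exists_curveIn (hsub hi₀) (hsub hi₁)
    refine hσ.le_qhDist_of_mul_le_dist hG (hM _ hi₀) ?_
    have hnext := hval (i + 1) hi
    push_cast at hnext
    linarith [hval i hi.le, dist_triangle (γ u) (γ (w i)) (γ (w (i + 1)))]
  calc (n : ℝ) * H = ∑ _i ∈ Finset.range n, H := by simp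
    _ ≤ ∑ i ∈ Finset.range n, qhDist G (γ (w i)) (γ (w (i + 1))) :=
      Finset.sum_le_sum fun i hi => hstep i (Finset.mem_range.1 hi)
    _ ≤ ν * qhDist G (γ s) (γ t) :=
      hsolid.sum_qhDist_le hG hγ hs (hu.1.trans hu.2) ht hn hw (fun i hi => huvs (hmem i hi))
        fun i hi => hhH.trans (hstep i hi)

lemma SolidArc.dist_le_of_bdist_le (hν : 0 ≤ ν) (hG : ∀ z ∈ G, 0 < bdist G z)
    (hγ : CurveIn G γ L x y) (hsolid : SolidArc G γ L ν h) {s t M : ℝ} (hs : 0 ≤ s)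
    (ht : t ≤ L) (hM : ∀ u ∈ Icc s t, bdist G (γ u) ≤ M) {u v : ℝ} (hu : u ∈ Icc s t)
    (hv : v ∈ Icc s t) :
    dist (γ u) (γ v) ≤
      (Real.exp (max h 1) - 1) * M * (1 + ν * qhDist G (γ s) (γ t)) := by
  wlog huv : u ≤ v generalizing u v
  · rw [dist_comm]
    exact this hv hu (le_of_not_ge huv)
  have hH : 1 ≤ max h 1 := le_max_right h 1
  have hMpos : 0 < M := (hG _ (hγ.mem u (Icc_subset_Icc hs ht hu))).trans_le (hM u hu)
  set ρ := (Real.exp (max h 1) - 1) * M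
  have hρ : 0 < ρ := mul_pos (by linarith [Real.add_one_le_exp (max h 1)]) hMpos
  set n := ⌊dist (γ u) (γ v) / ρ⌋₊
  have hn : (n : ℝ) ≤ ν * qhDist G (γ s) (γ t) := by
    rcases Nat.eq_zero_or_pos n with hn₀ | hn
    · rw [hn₀, Nat.cast_zero]
      exact mul_nonneg hν (qhDist_nonneg _ _)
    · refine (le_mul_of_one_le_right n.cast_nonneg hH).trans ?_
      refine hsolid.natCast_mul_le_of_le_dist hG hγ hs ht hM (zero_le_one.trans hH)
        (le_max_left h 1) hu.1 huv hv.2 hn ?_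
      exact (le_div_iff₀ hρ).1 (Nat.floor_le (by positivity))
  calc dist (γ u) (γ v) ≤ (n + 1) * ρ := ((div_lt_iff₀ hρ).1 (Nat.lt_floor_add_one _)).le
    _ ≤ ρ * (1 + ν * qhDist G (γ s) (γ t)) := by
      rw [mul_comm, add_comm]
      gcongr

/-- The constant with which a `(ν, h)`-solid arc in a `b`-uniform domain satisfies the layer
condition `LayerBounded` for the boundary distance: if `E = e^{max{h,1}} - 1`, it is the bound of
`le_of_le_add_mul_log` for the solutions of `r ≤ E (1 + ν (4b + 2) log (1 + 2br))`. -/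
noncomputable def layerConst (b ν h : ℝ) : ℝ :=
  let E := Real.exp (max h 1) - 1
  let a := E * (ν * (4 * b + 2))
  2 * (E + a * Real.log (1 + 2 * a * (2 * b)))

lemma IsUniform.qhDist_le_log_of_half_le (hb : 0 ≤ b) (hG : ∀ z ∈ G, 0 < bdist G z)
    (hU : IsUniform b G) (hx : x ∈ G) (hy : y ∈ G) {M D : ℝ} (hM : 0 < M)
    (hMx : M / 2 ≤ bdist G x) (hMy : M / 2 ≤ bdist G y) (hD : dist x y ≤ D) :
    qhDist G x y ≤ (4 * b + 2) * Real.log (1 + 2 * b * (D / M)) := by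
  refine (hU.qhDist_le_log hb hG hx hy).trans ?_
  have hratio : b * dist x y / min (bdist G x) (bdist G y) ≤ 2 * b * (D / M) :=
    calc b * dist x y / min (bdist G x) (bdist G y) ≤ b * D / (M / 2) := by
          have hD₀ := dist_nonneg.trans hD
          have hmin := le_min hMx hMy
          gcongr
      _ = 2 * b * (D / M) := by field_simp
  have hmin : 0 < min (bdist G x) (bdist G y) := lt_min (hG x hx) (hG y hy)
  gcongr

lemma SolidArc.layerBounded (hb : 0 ≤ b) (hν : 0 ≤ ν) (hG : ∀ z ∈ G, 0 < bdist G z)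
    (hU : IsUniform b G) (hγ : CurveIn G γ L x y) (hsolid : SolidArc G γ L ν h) :
    LayerBounded γ (fun u => bdist G (γ u)) L (layerConst b ν h) := by
  intro s t M hs hst ht hM hMs hMt u hu v hv
  have hsub : Icc s t ⊆ Icc 0 L := Icc_subset_Icc hs ht
  have hs' : s ∈ Icc s t := left_mem_Icc.2 hst
  have ht' : t ∈ Icc s t := right_mem_Icc.2 hst
  have hMpos : 0 < M := (hG _ (hγ.mem s (hsub hs'))).trans_le (hM s hs')
  set E := Real.exp (max h 1) - 1
  have hE₀ : 0 ≤ E := by linarith [Real.add_one_le_exp (max h 1), le_max_right h 1]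
  set D := Metric.diam (γ '' Icc s t)
  have hdist_le : ∀ u ∈ Icc s t, ∀ v ∈ Icc s t, dist (γ u) (γ v) ≤ D := fun u hu v hv =>
    dist_le_diam_of_mem (isCompact_Icc.image_of_continuousOn
      (hγ.lip.continuousOn.mono hsub)).isBounded (mem_image_of_mem γ hu) (mem_image_of_mem γ hv)
  have hk : qhDist G (γ s) (γ t) ≤ (4 * b + 2) * Real.log (1 + 2 * b * (D / M)) :=
    hU.qhDist_le_log_of_half_le hb hG (hγ.mem s (hsub hs')) (hγ.mem t (hsub ht')) hMpos hMs hMt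
      (hdist_le s hs' t ht')
  have hD : D ≤ E * M * (1 + ν * qhDist G (γ s) (γ t)) := by
    refine diam_le_of_forall_dist_le_of_nonempty (nonempty_Icc.2 hst |>.image γ) ?_
    rintro _ ⟨u, hu, rfl⟩ _ ⟨v, hv, rfl⟩
    exact hsolid.dist_le_of_bdist_le hν hG hγ hs ht hM hu hv
  have hratio : D / M ≤ E + E * (ν * (4 * b + 2)) * Real.log (1 + 2 * b * (D / M)) := by
    rw [div_le_iff₀ hMpos]
    calc D ≤ E * M * (1 + ν * ((4 * b + 2) * Real.log (1 + 2 * b * (D / M)))) :=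
          hD.trans (by gcongr)
      _ = _ := by ring
  exact (hdist_le u hu v hv).trans ((div_le_iff₀ hMpos).1
    (le_of_le_add_mul_log (by positivity) (by positivity)
      (div_nonneg diam_nonneg hMpos.le) hratio))

/-- The radius, in units of `T`, of a ball containing a `(ν, h)`-solid arc in a `b`-uniform domain
whose endpoints are at distance at most `T` from each other and from the boundary. -/
noncomputable def radiusConst (b ν h : ℝ) : ℝ :=
  2 * layerConst b ν h +
    Real.exp (max h (ν * ((4 * b + 2) * Real.log (1 + b * (4 * layerConst b ν h + 1)))))

lemma SolidArc.dist_le_exp_log (hb : 0 ≤ b) (hν : 0 ≤ ν) (hG : ∀ z ∈ G, 0 < bdist G z)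
    (hU : IsUniform b G) (hγ : CurveIn G γ L x y) (hsolid : SolidArc G γ L ν h) {s t T A : ℝ}
    (hs : 0 ≤ s) (ht : t ≤ L) (hgs : bdist G (γ s) = T) (hgt : bdist G (γ t) = T)
    (hdist : dist (γ s) (γ t) ≤ A * T) {u : ℝ} (hu : u ∈ Icc s t) :
    dist (γ u) (γ s) ≤
      (Real.exp (max h (ν * ((4 * b + 2) * Real.log (1 + b * A)))) - 1) * T := by
  have hst : s ≤ t := hu.1.trans hu.2
  have hsG : γ s ∈ G := hγ.mem s ⟨hs, hst.trans ht⟩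
  have htG : γ t ∈ G := hγ.mem t ⟨hs.trans hst, ht⟩
  have hT : 0 < T := hgs ▸ hG _ hsG
  have hk : qhDist G (γ s) (γ t) ≤ (4 * b + 2) * Real.log (1 + b * A) := by
    refine (hU.qhDist_le_log hb hG hsG htG).trans ?_
    rw [hgs, hgt, min_self]
    gcongr
    rw [div_le_iff₀ hT, mul_assoc]
    gcongr
  have := hsolid.dist_le_exp_max hG hγ hs ht (left_mem_Icc.2 hst) hu
  rw [dist_comm, hgs] at this
  exact this.trans (by gcongr)

lemma SolidArc.diam_le_of_bdist_le (hb : 0 ≤ b) (hν : 0 ≤ ν) (hG : ∀ z ∈ G, 0 < bdist G z)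
    (hU : IsUniform b G) (hγ : CurveIn G γ L x y) (hsolid : SolidArc G γ L ν h) {T : ℝ}
    (hx : bdist G x ≤ T) (hy : bdist G y ≤ T) (hxy : dist x y ≤ T) :
    Metric.diam (γ '' Icc 0 L) ≤ 2 * (radiusConst b ν h * T) := by
  have hT : 0 < T := (hG x hγ.source_mem).trans_le hx
  set C := layerConst b ν h
  set K := (4 * b + 2) * Real.log (1 + b * (4 * C + 1))
  have hlayer := hsolid.layerBounded hb hν hG hU hγ
  have hg₀ : 0 < bdist G (γ 0) := hG _ (hγ.mem 0 (left_mem_Icc.2 hγ.nonneg))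
  have hgL : 0 < bdist G (γ L) := hG _ (hγ.mem L (right_mem_Icc.2 hγ.nonneg))
  have hC₀ : 0 ≤ C := hlayer.const_nonneg hγ.nonneg hg₀
  have hradius : radiusConst b ν h * T = 2 * C * T + Real.exp (max h (ν * K)) * T :=
    add_mul _ _ _
  have hexp : 0 < Real.exp (max h (ν * K)) * T := by positivity
  suffices ∃ τ ∈ Icc 0 L, ∀ u ∈ Icc 0 L, dist (γ u) (γ τ) ≤ radiusConst b ν h * T by
    obtain ⟨τ, hτ, hball⟩ := this
    exact diam_le_of_subset_closedBall (dist_nonneg.trans (hball τ hτ)) (image_subset_iff.2 hball)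
  rcases hlayer.dist_le_or_exists_levels hγ.continuousOn_bdist hγ.nonneg hg₀ hgL
    (T := T) (by rwa [hγ.source]) (by rwa [hγ.target]) with
    ⟨τ, hτ, hball⟩ | ⟨σ, hσ, τ, hτ, hgσ, hgτ, hinit, hfinal⟩
  · exact ⟨τ, hτ, fun u hu => (hball u hu).trans (by linarith)⟩
  have hdist : dist (γ σ) (γ τ) ≤ (4 * C + 1) * T := by
    have hxσ := hinit 0 (left_mem_Icc.2 hσ.1)
    have hyτ := hfinal L (right_mem_Icc.2 hτ.2)
    rw [hγ.source, dist_comm] at hxσ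
    rw [hγ.target] at hyτ
    linarith [dist_triangle4 (γ σ) x y (γ τ)]
  have hmid : ∀ u ∈ Icc σ τ, dist (γ u) (γ σ) ≤ (Real.exp (max h (ν * K)) - 1) * T :=
    fun u hu => hsolid.dist_le_exp_log hb hν hG hU hγ hσ.1 hτ.2 hgσ hgτ hdist hu
  refine ⟨σ, hσ, fun u hu => ?_⟩
  rw [hradius]
  have hR : 0 ≤ 2 * C * T := by positivity
  rcases le_total u σ with huσ | hσu
  · linarith [hinit u ⟨hu.1, huσ⟩]
  rcases le_total u τ with huτ | hτu
  · linarith [hmid u ⟨hσu, huτ⟩]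
  · linarith [hfinal u ⟨hτu, hu.2⟩, hmid τ (right_mem_Icc.2 hτ.1),
      dist_triangle (γ u) (γ τ) (γ σ)]

lemma SolidArc.diam_le_of_mul_dist_le (hb : 0 ≤ b) (hν : 0 ≤ ν) (hG : ∀ z ∈ G, 0 < bdist G z)
    (hU : IsUniform b G) (hγ : CurveIn G γ L x y) (hsolid : SolidArc G γ L ν h)
    (hclose : b * dist x y ≤ min (bdist G x) (bdist G y)) :
    Metric.diam (γ '' Icc 0 L) ≤
      max (2 * (b * (Real.exp (ν * (4 * b + 2)) - 1)) * dist x y)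
        (2 * (Real.exp h - 1) * min (bdist G x) (bdist G y)) := by
  set m := min (bdist G x) (bdist G y) with hm
  set a := ν * (4 * b + 2)
  set q := b * dist x y / m with hq
  have hmpos : 0 < m := lt_min (hG x hγ.source_mem) (hG y hγ.target_mem)
  have hq₀ : 0 ≤ q := by positivity
  have hk : ν * qhDist G x y ≤ a * q := by
    rw [mul_assoc]
    gcongr
    exact hU.qhDist_le_div hb hG hγ.source_mem hγ.target_mem
  have hlin : (Real.exp (a * q) - 1) * m ≤ b * (Real.exp a - 1) * dist x y :=
    calc (Real.exp (a * q) - 1) * m ≤ (Real.exp a - 1) * q * m := by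
          gcongr
          exact exp_mul_sub_one_le hq₀ ((div_le_one hmpos).2 hclose)
      _ = b * (Real.exp a - 1) * dist x y := by rw [hq]; field_simp
  obtain ⟨v, hv, hmv⟩ : ∃ v ∈ Icc 0 L, bdist G (γ v) = m := by
    rcases min_choice (bdist G x) (bdist G y) with hmin | hmin
    · exact ⟨0, left_mem_Icc.2 hγ.nonneg, by rw [hγ.source, hm, hmin]⟩
    · exact ⟨L, right_mem_Icc.2 hγ.nonneg, by rw [hγ.target, hm, hmin]⟩
  have hball : ∀ u ∈ Icc 0 L, dist (γ u) (γ v) ≤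
      max (b * (Real.exp a - 1) * dist x y) ((Real.exp h - 1) * m) := by
    intro u hu
    have hdist := hsolid.dist_le_exp_max hG hγ le_rfl le_rfl hv hu
    rw [hγ.source, hγ.target, hmv, dist_comm] at hdist
    rcases max_choice h (ν * qhDist G x y) with hmax | hmax <;> rw [hmax] at hdist
    · exact le_max_of_le_right hdist
    · exact le_max_of_le_left (hdist.trans (le_trans (by gcongr) hlin))
  calc Metric.diam (γ '' Icc 0 L)
      ≤ 2 * max (b * (Real.exp a - 1) * dist x y) ((Real.exp h - 1) * m) :=
        diam_le_of_subset_closedBall (dist_nonneg.trans (hball v hv)) (image_subset_iff.2 hball)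
    _ = _ := by rw [mul_max_of_nonneg _ _ zero_le_two]; simp only [mul_assoc]

end SolidArcs

theorem stmt8_general (b ν h : ℝ) (hb : 0 ≤ b) (hν : 0 ≤ ν) :
    ∃ μ₃ : ℝ, 1 ≤ μ₃ ∧
      ∀ (X : Type*) [MetricSpace X] (G : Set X), IsOpen G → (frontier G).Nonempty →
        IsUniform b G → ∀ (x y : X) (γ : ℝ → X) (L : ℝ), CurveIn G γ L x y →
          SolidArc G γ L ν h →
            Metric.diam (γ '' Icc 0 L) ≤
              max (μ₃ * dist x y) (2 * (Real.exp h - 1) * min (bdist G x) (bdist G y)) := by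
  set μnear := 2 * (b * (Real.exp (ν * (4 * b + 2)) - 1))
  set μfar := 2 * (radiusConst b ν h * (b + 1))
  refine ⟨max 1 (max μnear μfar), le_max_left _ _,
    fun X _ G hopen hfr hU x y γ L hγ hsolid => ?_⟩
  have hG : ∀ z ∈ G, 0 < bdist G z := fun z hz => bdist_pos hopen hfr hz
  rcases le_total (b * dist x y) (min (bdist G x) (bdist G y)) with hnear | hfar
  · refine (hsolid.diam_le_of_mul_dist_le hb hν hG hU hγ hnear).trans ?_
    gcongr
    exact (le_max_left μnear μfar).trans (le_max_right _ _)
  · refine le_max_of_le_left ?_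
    have hxy := bdist_le_bdist_add_dist (G := G) x y
    have hyx := bdist_le_bdist_add_dist (G := G) y x
    rw [dist_comm] at hyx
    have hends : bdist G x ≤ (b + 1) * dist x y ∧ bdist G y ≤ (b + 1) * dist x y := by
      rcases min_le_iff.1 hfar with hle | hle <;> constructor <;>
        linarith [dist_nonneg (x := x) (y := y)]
    calc Metric.diam (γ '' Icc 0 L) ≤ 2 * (radiusConst b ν h * ((b + 1) * dist x y)) :=
          hsolid.diam_le_of_bdist_le hb hν hG hU hγ hends.1 hends.2
            (le_mul_of_one_le_left dist_nonneg (by linarith))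
      _ = μfar * dist x y := by ring
      _ ≤ max 1 (max μnear μfar) * dist x y := by
          gcongr
          exact (le_max_right μnear μfar).trans (le_max_right _ _)

/-- Lemma 5(2): There is a constant `μ₃ = μ₃(b,c,ν,h) ≥ 1` such that
any `(ν,h)`-solid arc `γ` with endpoints `x, y` in a `b`-uniform proper domain `G`
of a `c`-quasiconvex space satisfies
`diam(γ) ≤ max{μ₃|x−y|, 2(e^h − 1)·min{δ_G(x), δ_G(y)}}`. -/
theorem stmt8 (b c ν h : ℝ) (hb : 1 ≤ b) (hc : 1 ≤ c) (hν : 1 ≤ ν) (hh : 0 ≤ h) :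
    ∃ μ₃ : ℝ, 1 ≤ μ₃ ∧
      ∀ (X : Type) [MetricSpace X], QCSpace c X →
        ∀ G : Set X, IsProperDomain G → IsUniform b G →
          ∀ (x y : X) (γ : ℝ → X) (L : ℝ), CurveIn G γ L x y →
            SolidArc G γ L ν h →
            Metric.diam (γ '' Set.Icc 0 L) ≤
              max (μ₃ * dist x y)
                (2 * (Real.exp h - 1) * min (bdist G x) (bdist G y)) := by
  obtain ⟨μ₃, hμ₃, hdiam⟩ := stmt8_general.{0} b ν h (zero_le_one.trans hb) (zero_le_one.trans hν)
  refine ⟨μ₃, hμ₃, fun X _ hX G ⟨hopen, hconn, hne⟩ => ?_⟩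
  have := hX.preconnectedSpace
  exact hdiam X G hopen (nonempty_frontier_iff.2 ⟨hconn.nonempty, hne⟩)
end

section
/- Suppose X and Y are c-quasiconvex and complete metric spaces, G ⊊ X and G′ ⊊ Y are domains, and both f : G → G′ and f⁻¹ : G′ → G are weakly H-quasisymmetric. Then f is fully (M,C)-coarsely quasihyperbolic, i.e., there exist constants M = M(c,H) ≥ 1 and C = C(c,H) ≥ 0 such that for every subdomain D ⊂ G, (k_D(x,y) − C)/M ≤ k_{f(D)}(f(x), f(y)) ≤ M·k_D(x,y) + C for all x, y ∈ D. -/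
open Metric Set Filter

/-! The map `f` distorts distances by a bounded factor along a chain of boundedly many points
(`WeakQS.dist_le_of_chain`). Applied to `f`, this and completeness show that points of `D` whose
images approach a point outside `f(D)` must leave a fixed ball around any given `x ∈ D`. Applied
to `f⁻¹` along a curve from `f(x)` to the nearest part of `∂f(D)`, it then bounds `|x - y|` from
below in terms of `δ_D(x)` as soon as `|f(x) - f(y)|` is comparable to `δ_{f(D)}(f(x))`. Hence
points at small quasihyperbolic distance in `D` have images at quasihyperbolic distance at most
`1`, and as `k_D` is a length metric this local bound propagates to all distances. -/

section Curves

variable {X : Type*} [MetricSpace X] {D E : Set X} {γ γ' : ℝ → X} {L L' c s t : ℝ} {x y z : X}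

namespace CurveIn

theorem of_dist_le_sub (hL : 0 ≤ L)
    (hγ : ∀ s t, 0 ≤ s → s ≤ t → t ≤ L → dist (γ s) (γ t) ≤ t - s)
    (hx : γ 0 = x) (hy : γ L = y) (hD : ∀ t ∈ Icc 0 L, γ t ∈ D) : CurveIn D γ L x y where
  nonneg := hL
  lip := by
    refine LipschitzOnWith.of_dist_le_mul fun s hs t ht => ?_
    rw [NNReal.coe_one, one_mul]
    wlog hst : s ≤ t generalizing s t
    · rw [dist_comm, dist_comm s]
      exact this t ht s hs (le_of_not_ge hst)
    · rw [dist_comm s, Real.dist_eq, abs_of_nonneg (sub_nonneg.2 hst)]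
      exact hγ s t hs.1 hst ht.2
  source := hx
  target := hy
  mem := hD

theorem left_mem (h : CurveIn D γ L x y) : x ∈ D := h.source ▸ h.mem 0 (left_mem_Icc.2 h.nonneg)

theorem right_mem (h : CurveIn D γ L x y) : y ∈ D := h.target ▸ h.mem L (right_mem_Icc.2 h.nonneg)

theorem dist_le_sub (h : CurveIn D γ L x y) (hs : 0 ≤ s) (hst : s ≤ t) (ht : t ≤ L) :
    dist (γ s) (γ t) ≤ t - s := by
  have := h.lip.dist_le_mul s ⟨hs, hst.trans ht⟩ t ⟨hs.trans hst, ht⟩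
  rwa [NNReal.coe_one, one_mul, dist_comm s t, Real.dist_eq, abs_of_nonneg (sub_nonneg.2 hst)]
    at this

theorem dist_left_le (h : CurveIn D γ L x y) (ht : t ∈ Icc 0 L) : dist x (γ t) ≤ t := by
  simpa [h.source] using h.dist_le_sub le_rfl ht.1 ht.2

theorem dist_le_s13 (h : CurveIn D γ L x y) : dist x y ≤ L := by
  simpa [h.target] using h.dist_left_le (right_mem_Icc.2 h.nonneg)

protected theorem reverse_s13 (h : CurveIn D γ L x y) : CurveIn D (fun t => γ (L - t)) L y x :=
  of_dist_le_sub h.nonneg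
    (fun s t hs hst ht => by
      rw [dist_comm]
      linarith [h.dist_le_sub (sub_nonneg.2 ht) (sub_le_sub_left hst L) (sub_le_self L hs)])
    (by simp [h.target]) (by simp [h.source])
    fun t ht => h.mem _ ⟨sub_nonneg.2 ht.2, sub_le_self L ht.1⟩

protected theorem restrict (h : CurveIn D γ L x y) (hs : 0 ≤ s) (hst : s ≤ t) (ht : t ≤ L)
    (hE : ∀ u ∈ Icc s t, γ u ∈ E) : CurveIn E (fun u => γ (s + u)) (t - s) (γ s) (γ t) :=
  of_dist_le_sub (sub_nonneg.2 hst)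
    (fun u v hu huv hv => by
      linarith [h.dist_le_sub (s := s + u) (t := s + v) (by linarith) (by linarith)
        (by linarith)])
    (by simp) (by simp) fun u hu => hE _ ⟨by linarith [hu.1], by linarith [hu.2]⟩

protected theorem append (h : CurveIn D γ L x y) (h' : CurveIn D γ' L' y z) :
    CurveIn D (fun t => if t ≤ L then γ t else γ' (t - L)) (L + L') x z := by
  have hL' := h'.nonneg
  refine of_dist_le_sub (add_nonneg h.nonneg hL') (fun s t hs hst ht => ?_)
    (by simp [h.nonneg, h.source]) ?_ fun t ht => ?_
  · split_ifs with hsL htL htL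
    · exact h.dist_le_sub hs hst htL
    · have hγ := h.dist_le_sub hs hsL le_rfl
      have hγ' := h'.dist_left_le (t := t - L) ⟨by linarith, by linarith⟩
      rw [h.target] at hγ
      linarith [dist_triangle (γ s) y (γ' (t - L))]
    · exact absurd (hst.trans htL) hsL
    · linarith [h'.dist_le_sub (s := s - L) (t := t - L) (by linarith) (by linarith)
        (by linarith)]
  · split_ifs with hle
    · obtain rfl : L' = 0 := by linarith
      rw [add_zero, h.target, ← h'.source, h'.target]
    · simp [h'.target]
  · split_ifs with htL
    · exact h.mem t ⟨ht.1, htL⟩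
    · exact h'.mem _ ⟨by linarith, by linarith [ht.2]⟩

theorem tendsto_nhdsLT (h : CurveIn D γ L x y) (hL : 0 < L) :
    Tendsto γ (nhdsWithin L (Iio L)) (nhds y) := by
  rw [← h.target, ← nhdsWithin_Ioo_eq_nhdsLT hL]
  exact (h.lip.continuousOn L (right_mem_Icc.2 h.nonneg)).mono_left
    (nhdsWithin_mono _ Ioo_subset_Icc_self)

theorem exists_first_exit (h : CurveIn E γ L x y) (hD : IsOpen D) (hy : y ∉ D) :
    ∃ t ∈ Icc 0 L, γ t ∉ D ∧ ∀ s ∈ Ico 0 t, γ s ∈ D := by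
  have hclosed : IsClosed (Icc 0 L ∩ γ ⁻¹' Dᶜ) :=
    h.lip.continuousOn.preimage_isClosed_of_isClosed isClosed_Icc hD.isClosed_compl
  have hne : (Icc 0 L ∩ γ ⁻¹' Dᶜ).Nonempty :=
    ⟨L, right_mem_Icc.2 h.nonneg, by simpa [h.target] using hy⟩
  obtain ⟨t, ⟨ht, htD⟩, hmin⟩ :=
    (isCompact_Icc.of_isClosed_subset hclosed inter_subset_left).exists_isLeast hne
  refine ⟨t, ht, htD, fun s hs => ?_⟩
  by_contra hsD
  exact hs.2.not_ge (hmin ⟨⟨hs.1, hs.2.le.trans ht.2⟩, hsD⟩)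

theorem of_lt_bdist (h : CurveIn E γ L x y) (hD : IsOpen D) (hx : x ∈ D) (hL : L < bdist D x) :
    CurveIn D γ L x y := by
  refine { h with mem := fun t ht => ?_ }
  have hfr : ∀ t ∈ Icc 0 L, γ t ∉ frontier D := fun t ht htD => by
    have : bdist D x ≤ dist x (γ t) := infDist_le_dist_of_mem htD
    linarith [h.dist_left_le ht, ht.2]
  have hsub : γ '' Icc 0 L ⊆ D :=
    (isPreconnected_Icc.image γ h.lip.continuousOn).subset_left_of_subset_union hD
      isClosed_closure.isOpen_compl
      (disjoint_compl_right.mono_right (compl_subset_compl.2 subset_closure))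
      (by
        rintro _ ⟨t, ht, rfl⟩
        by_contra htD
        rw [mem_union, not_or, notMem_compl_iff] at htD
        exact hfr t ht (hD.frontier_eq ▸ ⟨htD.2, htD.1⟩))
      ⟨x, ⟨0, left_mem_Icc.2 h.nonneg, h.source⟩, hx⟩
  exact hsub ⟨t, ht, rfl⟩

end CurveIn

theorem bdist_le_bdist_add_dist_s13 (D : Set X) (x y : X) : bdist D x ≤ bdist D y + dist x y :=
  infDist_le_infDist_add_dist

theorem bdist_pos_s13 (hD : IsOpen D) (hfr : (frontier D).Nonempty) (hx : x ∈ D) : 0 < bdist D x :=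
  (isClosed_frontier.notMem_iff_infDist_pos hfr).1
    (disjoint_right.1 (disjoint_frontier_iff_isOpen.2 hD) hx)

namespace QCSpace

theorem preconnectedSpace_s13 (hX : QCSpace c X) : PreconnectedSpace X := by
  refine ⟨isPreconnected_of_forall_pair fun x _ y _ => ?_⟩
  obtain ⟨γ, L, hγ, -⟩ := hX x y
  exact ⟨γ '' Icc 0 L, subset_univ _, ⟨0, left_mem_Icc.2 hγ.nonneg, hγ.source⟩,
    ⟨L, right_mem_Icc.2 hγ.nonneg, hγ.target⟩, isPreconnected_Icc.image _ hγ.lip.continuousOn⟩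

theorem frontier_nonempty (hX : QCSpace c X) (hne : D.Nonempty) (hD : D ≠ univ) :
    (frontier D).Nonempty :=
  have := hX.preconnectedSpace_s13
  nonempty_frontier_iff.2 ⟨hne, hD⟩

theorem exists_curveIn_of_lt_bdist (hX : QCSpace c X) (hD : IsOpen D) (hx : x ∈ D)
    (hxy : c * dist x y < bdist D x) : ∃ γ L, CurveIn D γ L x y ∧ L ≤ c * dist x y := by
  obtain ⟨γ, L, hγ, hL⟩ := hX x y
  exact ⟨γ, L, hγ.of_lt_bdist hD hx (hL.trans_lt hxy), hL⟩

theorem exists_curveIn (hX : QCSpace c X) (hD : IsProperDomain D) (hx : x ∈ D) (hy : y ∈ D) :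
    ∃ γ L, CurveIn D γ L x y := by
  refine hD.2.1.isPreconnected.induction₂ (fun x y => ∃ γ L, CurveIn D γ L x y)
    (fun x hx => mem_nhdsWithin_of_mem_nhds ?_)
    (fun x y z _ _ _ ⟨γ, L, h⟩ ⟨γ', L', h'⟩ => ⟨_, _, h.append h'⟩)
    (fun x y _ _ ⟨γ, L, h⟩ => ⟨_, _, h.reverse_s13⟩) hx hy
  have hpos := bdist_pos_s13 hD.1 (hX.frontier_nonempty ⟨x, hx⟩ hD.2.2) hx
  have hcont : ContinuousAt (fun y => c * dist x y) x := by fun_prop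
  filter_upwards [hcont.eventually_lt_const (by simpa using hpos)] with y hy
  obtain ⟨γ, L, hγ, -⟩ := hX.exists_curveIn_of_lt_bdist hD.1 hx hy
  exact ⟨γ, L, hγ⟩

theorem exists_curveIn_univ_notMem (hX : QCSpace c X) (hc : 0 ≤ c) (hD : IsOpen D)
    (hfr : (frontier D).Nonempty) (hx : x ∈ D) :
    ∃ γ L w, CurveIn univ γ L x w ∧ w ∉ D ∧ (∀ t ∈ Ico 0 L, γ t ∈ D) ∧
      L ≤ 2 * c * bdist D x := by
  have hpos := bdist_pos_s13 hD hfr hx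
  obtain ⟨v, hv, hxv : dist x v < 2 * bdist D x⟩ :=
    (infDist_lt_iff hfr).1 (lt_two_mul_self hpos)
  have hvD : v ∉ D := disjoint_left.1 (disjoint_frontier_iff_isOpen.2 hD) hv
  obtain ⟨γ, L, hγ, hL⟩ := hX x v
  obtain ⟨t, ht, htD, hlt⟩ := hγ.exists_first_exit hD hvD
  have hγt := hγ.restrict (E := univ) le_rfl ht.1 ht.2 fun _ _ => mem_univ _
  simp only [zero_add, sub_zero, hγ.source] at hγt
  refine ⟨γ, t, γ t, hγt, htD, hlt, ?_⟩
  linarith [ht.2, mul_le_mul_of_nonneg_left hxv.le hc]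

end QCSpace

end Curves

section QuasihyperbolicLength

variable {X : Type*} [MetricSpace X] {D : Set X} {γ γ' : ℝ → X} {L L' s t : ℝ} {x y z : X}

theorem qhLength_comp_add_left (D : Set X) (γ : ℝ → X) (s t : ℝ) :
    qhLength D (fun u => γ (s + u)) (t - s) = qhLengthOn D γ s t := by
  simpa [qhLength, qhLengthOn] using
    intervalIntegral.integral_comp_add_left (a := 0) (b := t - s) (fun u => 1 / bdist D (γ u)) s

namespace CurveIn

theorem qhLength_nonneg (h : CurveIn D γ L x y) : 0 ≤ qhLength D γ L :=
  intervalIntegral.integral_nonneg h.nonneg fun _ _ => one_div_nonneg.2 infDist_nonneg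

theorem qhDist_le_s13 (h : CurveIn D γ L x y) : qhDist D x y ≤ qhLength D γ L :=
  csInf_le ⟨0, by rintro _ ⟨γ', L', h', rfl⟩; exact h'.qhLength_nonneg⟩ ⟨γ, L, h, rfl⟩

theorem intervalIntegrable_one_div_bdist_s13 (h : CurveIn D γ L x y) (hD : IsOpen D)
    (hfr : (frontier D).Nonempty) (hs : 0 ≤ s) (hst : s ≤ t) (ht : t ≤ L) :
    IntervalIntegrable (fun u => 1 / bdist D (γ u)) MeasureTheory.volume s t := by
  have hcont : ContinuousOn (fun u => 1 / bdist D (γ u)) (Icc 0 L) :=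
    continuousOn_const.div ((continuous_infDist_pt _).comp_continuousOn h.lip.continuousOn)
      fun u hu => (bdist_pos_s13 hD hfr (h.mem u hu)).ne'
  exact (hcont.mono (Icc_subset_Icc hs ht)).intervalIntegrable_of_Icc hst

theorem qhLengthOn_add_qhLengthOn (h : CurveIn D γ L x y) (hD : IsOpen D)
    (hfr : (frontier D).Nonempty) (ht : t ∈ Icc 0 L) :
    qhLengthOn D γ 0 t + qhLengthOn D γ t L = qhLength D γ L :=
  intervalIntegral.integral_add_adjacent_intervals
    (h.intervalIntegrable_one_div_bdist_s13 hD hfr le_rfl ht.1 ht.2)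
    (h.intervalIntegrable_one_div_bdist_s13 hD hfr ht.1 ht.2 le_rfl)

theorem continuousOn_qhLengthOn (h : CurveIn D γ L x y) (hD : IsOpen D)
    (hfr : (frontier D).Nonempty) : ContinuousOn (qhLengthOn D γ 0) (Icc 0 L) := by
  have := intervalIntegral.continuousOn_primitive_interval'
    (h.intervalIntegrable_one_div_bdist_s13 hD hfr le_rfl h.nonneg le_rfl) left_mem_uIcc
  rwa [uIcc_of_le h.nonneg] at this

theorem qhLength_append (h : CurveIn D γ L x y) (h' : CurveIn D γ' L' y z) (hD : IsOpen D)
    (hfr : (frontier D).Nonempty) :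
    qhLength D (fun t => if t ≤ L then γ t else γ' (t - L)) (L + L') =
      qhLength D γ L + qhLength D γ' L' := by
  have hL' := h'.nonneg
  rw [← (h.append h').qhLengthOn_add_qhLengthOn hD hfr ⟨h.nonneg, by linarith⟩,
    ← qhLength_comp_add_left D _ L, add_sub_cancel_left]
  congr 1
  · refine intervalIntegral.integral_congr fun u hu => ?_
    rw [uIcc_of_le h.nonneg] at hu
    simp only [if_pos hu.2]
  · refine intervalIntegral.integral_congr fun u hu => ?_
    rw [uIcc_of_le hL'] at hu
    rcases hu.1.eq_or_lt with rfl | hu0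
    · simp [h.target, h'.source]
    · simp [hu0.not_ge]

theorem log_one_add_div_bdist_le_qhLength (h : CurveIn D γ L x y) (hD : IsOpen D)
    (hfr : (frontier D).Nonempty) : Real.log (1 + L / bdist D x) ≤ qhLength D γ L := by
  have hpos := bdist_pos_s13 hD hfr h.left_mem
  have hL := h.nonneg
  calc Real.log (1 + L / bdist D x) = Real.log ((bdist D x + L) / bdist D x) := by
        rw [add_div, div_self hpos.ne']
    _ = ∫ u in (0 : ℝ)..L, 1 / (bdist D x + u) := by
        rw [intervalIntegral.integral_comp_add_left (fun u => 1 / u), add_zero,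
          integral_one_div_of_pos hpos (by linarith)]
    _ ≤ qhLength D γ L := by
        refine intervalIntegral.integral_mono_on hL
          (ContinuousOn.intervalIntegrable_of_Icc hL (continuousOn_const.div (by fun_prop)
            fun u hu => by linarith [hu.1]))
          (h.intervalIntegrable_one_div_bdist_s13 hD hfr le_rfl hL le_rfl) fun u hu => ?_
        refine one_div_le_one_div_of_le (bdist_pos_s13 hD hfr (h.mem u hu)) ?_
        have := bdist_le_bdist_add_dist_s13 D (γ u) x
        rw [dist_comm] at this
        linarith [h.dist_left_le hu]

theorem qhLength_le_div (h : CurveIn D γ L x y) (hD : IsOpen D) (hfr : (frontier D).Nonempty)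
    (hL : L < bdist D x) : qhLength D γ L ≤ L / (bdist D x - L) := by
  calc qhLength D γ L ≤ ∫ _ in (0 : ℝ)..L, 1 / (bdist D x - L) := by
        refine intervalIntegral.integral_mono_on h.nonneg
          (h.intervalIntegrable_one_div_bdist_s13 hD hfr le_rfl h.nonneg le_rfl)
          intervalIntegrable_const fun u hu => ?_
        refine one_div_le_one_div_of_le (sub_pos.2 hL) ?_
        linarith [h.dist_left_le hu, hu.2, bdist_le_bdist_add_dist_s13 D x (γ u)]
    _ = L / (bdist D x - L) := by
        rw [intervalIntegral.integral_const, smul_eq_mul, sub_zero, mul_one_div]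

end CurveIn

end QuasihyperbolicLength

section QuasihyperbolicDistance

variable {X : Type*} [MetricSpace X] {D : Set X} {c : ℝ} {x y z : X}

namespace QCSpace

theorem le_qhDist (hX : QCSpace c X) (hD : IsProperDomain D) (hx : x ∈ D) (hy : y ∈ D) {a : ℝ}
    (ha : ∀ γ L, CurveIn D γ L x y → a ≤ qhLength D γ L) : a ≤ qhDist D x y := by
  obtain ⟨γ₀, L₀, h₀⟩ := hX.exists_curveIn hD hx hy
  refine le_csInf ⟨_, γ₀, L₀, h₀, rfl⟩ ?_
  rintro _ ⟨γ, L, h, rfl⟩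
  exact ha γ L h

theorem qhDist_nonneg (hX : QCSpace c X) (hD : IsProperDomain D) (hx : x ∈ D) (hy : y ∈ D) :
    0 ≤ qhDist D x y :=
  hX.le_qhDist hD hx hy fun _ _ h => h.qhLength_nonneg

theorem qhDist_triangle (hX : QCSpace c X) (hD : IsProperDomain D) (hx : x ∈ D) (hy : y ∈ D)
    (hz : z ∈ D) : qhDist D x z ≤ qhDist D x y + qhDist D y z := by
  have hfr := hX.frontier_nonempty ⟨x, hx⟩ hD.2.2
  refine sub_le_iff_le_add.1 (hX.le_qhDist hD hx hy fun γ L h => ?_)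
  rw [sub_le_iff_le_add, ← sub_le_iff_le_add']
  refine hX.le_qhDist hD hy hz fun γ' L' h' => ?_
  rw [sub_le_iff_le_add', ← h.qhLength_append h' hD.1 hfr]
  exact (h.append h').qhDist_le_s13

theorem log_one_add_dist_div_bdist_le_qhDist (hX : QCSpace c X) (hD : IsProperDomain D)
    (hx : x ∈ D) (hy : y ∈ D) : Real.log (1 + dist x y / bdist D x) ≤ qhDist D x y := by
  have hfr := hX.frontier_nonempty ⟨x, hx⟩ hD.2.2
  have hpos := bdist_pos_s13 hD.1 hfr hx
  refine hX.le_qhDist hD hx hy fun γ L h => ?_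
  refine le_trans ?_ (h.log_one_add_div_bdist_le_qhLength hD.1 hfr)
  gcongr
  exact h.dist_le_s13

theorem qhDist_le_div (hX : QCSpace c X) (hD : IsOpen D) (hfr : (frontier D).Nonempty) (hx : x ∈ D)
    (hxy : c * dist x y < bdist D x) :
    qhDist D x y ≤ c * dist x y / (bdist D x - c * dist x y) := by
  obtain ⟨γ, L, h, hL⟩ := hX.exists_curveIn_of_lt_bdist hD hx hxy
  have hpos : 0 < bdist D x - c * dist x y := sub_pos.2 hxy
  calc qhDist D x y ≤ L / (bdist D x - L) :=
        h.qhDist_le_s13.trans (h.qhLength_le_div hD hfr (hL.trans_lt hxy))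
    _ ≤ c * dist x y / (bdist D x - c * dist x y) :=
        div_le_div₀ (h.nonneg.trans hL) hL hpos (by linarith)

theorem exists_qhDist_lt_lt (hX : QCSpace c X) (hD : IsProperDomain D) (hx : x ∈ D) (hy : y ∈ D)
    {a b : ℝ} (ha : 0 < a) (hb : 0 < b) (hxy : qhDist D x y < a + b) :
    ∃ z ∈ D, qhDist D x z < a ∧ qhDist D z y < b := by
  have hfr := hX.frontier_nonempty ⟨x, hx⟩ hD.2.2
  obtain ⟨γ₀, L₀, h₀⟩ := hX.exists_curveIn hD hx hy
  have hne : {l | ∃ γ L, CurveIn D γ L x y ∧ qhLength D γ L = l}.Nonempty :=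
    ⟨_, γ₀, L₀, h₀, rfl⟩
  obtain ⟨_, ⟨γ, L, h, rfl⟩, hl⟩ := exists_lt_of_csInf_lt hne hxy
  set l := qhLength D γ L
  have hl0 : 0 ≤ l := h.qhLength_nonneg
  have hsplit : a * l / (a + b) + b * l / (a + b) = l := by field_simp
  have hla : a * l / (a + b) < a := by
    rw [div_lt_iff₀ (by positivity)]
    exact mul_lt_mul_of_pos_left hl ha
  have hlb : b * l / (a + b) < b := by
    rw [div_lt_iff₀ (by positivity)]
    exact mul_lt_mul_of_pos_left hl hb
  have hlb0 : 0 ≤ b * l / (a + b) := by positivity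
  obtain ⟨t, ht, hlt⟩ := intermediate_value_Icc h.nonneg (h.continuousOn_qhLengthOn hD.1 hfr)
    (show a * l / (a + b) ∈ Icc (qhLengthOn D γ 0 0) (qhLengthOn D γ 0 L) from
      ⟨by rw [qhLengthOn, intervalIntegral.integral_same]; positivity, by
        change _ ≤ l; linarith⟩)
  have hadd := h.qhLengthOn_add_qhLengthOn hD.1 hfr ht
  have hleft := (h.restrict le_rfl ht.1 ht.2 fun u hu => h.mem u ⟨hu.1, hu.2.trans ht.2⟩).qhDist_le_s13
  have hright := (h.restrict ht.1 ht.2 le_rfl fun u hu => h.mem u ⟨ht.1.trans hu.1, hu.2⟩).qhDist_le_s13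
  rw [qhLength_comp_add_left, h.source] at hleft
  rw [qhLength_comp_add_left, h.target] at hright
  exact ⟨γ t, h.mem t ht, by linarith, by linarith⟩

/-- Since `k_D` is a length metric, a bound at a fixed scale propagates to all scales. -/
theorem le_qhDist_div_add_one (hX : QCSpace c X) (hD : IsProperDomain D) {ρ : D → D → ℝ}
    (hρ : ∀ x y z, ρ x z ≤ ρ x y + ρ y z) {r : ℝ} (hr : 0 < r)
    (hloc : ∀ x y : D, qhDist D x y < r → ρ x y ≤ 1) (x y : D) :
    ρ x y ≤ qhDist D x y / r + 1 := by
  have hchain (n : ℕ) : ∀ x y : D, qhDist D x y < (n + 1) * r → ρ x y ≤ n + 1 := by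
    induction n with
    | zero => simpa using hloc
    | succ n ih =>
      intro x y hxy
      push_cast at hxy ⊢
      obtain ⟨z, hz, hxz, hzy⟩ := hX.exists_qhDist_lt_lt hD x.2 y.2 hr
        (by positivity : 0 < (n + 1) * r) (by linarith)
      linarith [hρ x ⟨z, hz⟩ y, hloc x ⟨z, hz⟩ hxz, ih ⟨z, hz⟩ y hzy]
  have hfloor : (⌊qhDist D x y / r⌋₊ : ℝ) ≤ qhDist D x y / r :=
    Nat.floor_le (div_nonneg (hX.qhDist_nonneg hD x.2 y.2) hr.le)
  linarith [hchain _ x y ((div_lt_iff₀ hr).1 (Nat.lt_floor_add_one _))]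

end QCSpace

end QuasihyperbolicDistance

section WeakQuasisymmetry

variable {X Y : Type*} [MetricSpace X] [MetricSpace Y] {c c' H H' : ℝ} {D : Set X} {D' : Set Y}

namespace WeakQS

/-- Each `p i` is at distance at least `dist (p 0) a / 2` from `p 0` or from `a`, and that point
can be compared with `p (i + 1)`. -/
theorem dist_le_of_chain {f : X → Y} (hf : WeakQS H f) (hH : 0 ≤ H) {p : ℕ → X} {a : X} {n : ℕ}
    (hp : ∀ i < n, 2 * dist (p i) (p (i + 1)) ≤ dist (p 0) a) :
    dist (f (p 0)) (f (p n)) + dist (f (p 0)) (f a) ≤ (1 + H) ^ n * dist (f (p 0)) (f a) := by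
  induction n with
  | zero => simp
  | succ n ih =>
    have hstep : dist (f (p n)) (f (p (n + 1))) ≤
        H * (dist (f (p 0)) (f (p n)) + dist (f (p 0)) (f a)) := by
      have hpn := hp n n.lt_succ_self
      have htri := dist_triangle (p 0) (p n) a
      rcases le_total (dist (p n) (p (n + 1))) (dist (p n) (p 0)) with hle | hle
      · refine (hf _ _ _ hle).trans (mul_le_mul_of_nonneg_left ?_ hH)
        rw [dist_comm]
        exact le_add_of_nonneg_right dist_nonneg
      · rw [dist_comm (p n) (p 0)] at hle
        refine (hf _ _ a (by linarith)).trans (mul_le_mul_of_nonneg_left ?_ hH)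
        rw [dist_comm (f (p 0)) (f (p n))]
        exact dist_triangle _ _ _
    calc dist (f (p 0)) (f (p (n + 1))) + dist (f (p 0)) (f a)
        ≤ (1 + H) * (dist (f (p 0)) (f (p n)) + dist (f (p 0)) (f a)) := by
          linarith [dist_triangle (f (p 0)) (f (p n)) (f (p (n + 1)))]
      _ ≤ (1 + H) * ((1 + H) ^ n * dist (f (p 0)) (f a)) :=
          mul_le_mul_of_nonneg_left (ih fun i hi => hp i (hi.trans n.lt_succ_self)) (by linarith)
      _ = (1 + H) ^ (n + 1) * dist (f (p 0)) (f a) := by ring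

theorem dist_le_of_curveIn {f : D → Y} (hf : WeakQS H f) (hH : 0 ≤ H) {γ : ℝ → X} {L : ℝ}
    {p q a : D} (h : CurveIn D γ L p q) {n : ℕ} (hL : 2 * L ≤ n * dist p a) :
    dist (f p) (f q) ≤ (1 + H) ^ n * dist (f p) (f a) := by
  let τ (i : ℕ) : Icc 0 L := projIcc 0 L h.nonneg (i * (L / n))
  let u (i : ℕ) : D := ⟨γ (τ i), h.mem _ (τ i).2⟩
  have hu0 : u 0 = p := Subtype.ext (by simp [u, τ, projIcc_left, h.source])
  have hun : u n = q := by
    have hτ : (τ n : ℝ) = L := by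
      rcases eq_or_ne n 0 with rfl | hn
      · have hL0 : L ≤ 0 := by
          rw [Nat.cast_zero, zero_mul] at hL
          linarith
        obtain rfl : L = 0 := hL0.antisymm h.nonneg
        simp [τ]
      · simp [τ, mul_div_cancel₀ L (Nat.cast_ne_zero.2 hn : (n : ℝ) ≠ 0)]
    exact Subtype.ext (by simp [u, hτ, h.target])
  have hu : ∀ i < n, 2 * dist (u i) (u (i + 1)) ≤ dist (u 0) a := fun i hi => by
    have hn : (0 : ℝ) < n := by exact_mod_cast i.zero_le.trans_lt hi
    have hdist : dist (u i) (u (i + 1)) ≤ L / n := by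
      calc dist (u i) (u (i + 1)) = dist (γ (τ i)) (γ (τ (i + 1))) := rfl
        _ ≤ dist (τ i : ℝ) (τ (i + 1)) := by
            simpa only [NNReal.coe_one, one_mul] using
              h.lip.dist_le_mul _ (τ i).2 _ (τ (i + 1)).2
        _ ≤ |i * (L / n) - (i + 1 : ℕ) * (L / n)| := abs_projIcc_sub_projIcc h.nonneg
        _ = L / n := by
            rw [← sub_mul, abs_mul, abs_of_nonneg (div_nonneg h.nonneg hn.le)]
            simp
    have hLn : 2 * (L / n) ≤ dist p a := by
      rw [← mul_div_assoc, div_le_iff₀ hn]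
      linarith
    rw [hu0]
    linarith
  have := hf.dist_le_of_chain hH hu
  rw [hu0, hun] at this
  linarith [dist_nonneg (x := f p) (y := f a)]

theorem cauchy_of_tendsto {f : D → Y} (hf : WeakQS H f) (hH : 0 ≤ H) {l : Filter D} [l.NeBot]
    {w : Y} (hw : Tendsto f l (nhds w)) {x : D} (hx : f x ≠ w) {R : ℝ}
    (hl : ∀ᶠ z : D in l, ∃ γ L, CurveIn D γ L z x ∧ L ≤ R) : Cauchy l := by
  refine Metric.cauchy_iff.2 ⟨‹_›, fun ε hε => ?_⟩
  set A := (1 + H) ^ ⌈2 * R / ε⌉₊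
  have hA : 0 ≤ A := by positivity
  have hη : 0 < dist (f x) w / (2 * A + 1) := div_pos (dist_pos.2 hx) (by positivity)
  refine ⟨_, hl.and (hw.eventually (ball_mem_nhds w hη)), fun z hz z' hz' => ?_⟩
  obtain ⟨⟨γ, L, h, hLR⟩, hzw : dist (f z) w < _⟩ := hz
  have hzw' : dist (f z') w < dist (f x) w / (2 * A + 1) := hz'.2
  by_contra! hfar
  have hL : 2 * L ≤ ⌈2 * R / ε⌉₊ * dist z z' :=
    calc 2 * L ≤ 2 * R := by linarith
      _ ≤ ⌈2 * R / ε⌉₊ * ε := (div_le_iff₀ hε).1 (Nat.le_ceil _)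
      _ ≤ ⌈2 * R / ε⌉₊ * dist z z' := by gcongr
  refine lt_irrefl (dist (f x) w) ?_
  calc dist (f x) w ≤ dist (f z) (f x) + dist (f z) w := dist_triangle_left _ _ _
    _ ≤ A * dist (f z) (f z') + dist (f z) w := by
        gcongr
        exact hf.dist_le_of_curveIn hH h hL
    _ ≤ A * (dist (f z) w + dist (f z') w) + dist (f z) w := by
        gcongr
        exact dist_triangle_right _ _ _
    _ = (A + 1) * dist (f z) w + A * dist (f z') w := by ring
    _ < (A + 1) * (dist (f x) w / (2 * A + 1)) + A * (dist (f x) w / (2 * A + 1)) := by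
        gcongr
    _ = dist (f x) w := by
        field_simp
        ring

theorem eventually_bdist_lt_of_notMem_range [CompleteSpace X] {f : D → Y} (hf : WeakQS H f)
    (hH : 0 ≤ H) (hfc : Continuous f) (hX : QCSpace c X) (hD : IsOpen D)
    (hfr : (frontier D).Nonempty) {w : Y} (hw : w ∉ range f) (x : D) :
    ∀ᶠ z in comap f (nhds w), bdist D x < 2 * c * dist x z := by
  by_contra hfreq
  have hpos := bdist_pos_s13 hD hfr x.2
  set S : Set D := {z | ¬ bdist D x < 2 * c * dist x z}
  have : (comap f (nhds w) ⊓ 𝓟 S).NeBot := frequently_mem_iff_neBot.1 (not_eventually.1 hfreq)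
  have hS : ∀ᶠ z : D in comap f (nhds w) ⊓ 𝓟 S, c * dist (x : X) z ≤ bdist D x / 2 :=
    eventually_inf_principal.2 (Eventually.of_forall fun z hz => by
      have hz : 2 * c * dist (x : X) z ≤ bdist D x := not_lt.1 hz
      linarith)
  have hlim : Tendsto f (comap f (nhds w) ⊓ 𝓟 S) (nhds w) := tendsto_comap.mono_left inf_le_left
  have hcauchy : Cauchy (comap f (nhds w) ⊓ 𝓟 S) := by
    refine hf.cauchy_of_tendsto hH hlim (fun hx => hw ⟨x, hx⟩) (R := bdist D x / 2) ?_
    filter_upwards [hS] with z hz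
    obtain ⟨γ, L, h, hL⟩ := hX.exists_curveIn_of_lt_bdist hD x.2 (by linarith)
    exact ⟨_, L, h.reverse_s13, hL.trans hz⟩
  obtain ⟨v, hv⟩ := CompleteSpace.complete (hcauchy.map uniformContinuous_subtype_val)
  have hv : Tendsto ((↑) : D → X) (comap f (nhds w) ⊓ 𝓟 S) (nhds v) := hv
  have hxv : c * dist (x : X) v ≤ bdist D x / 2 :=
    le_of_tendsto ((tendsto_const_nhds.dist hv).const_mul c) hS
  obtain ⟨_, _, h, -⟩ := hX.exists_curveIn_of_lt_bdist hD x.2 (by linarith : c * dist (x : X) v < _)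
  have hv' : Tendsto id (comap f (nhds w) ⊓ 𝓟 S) (nhds (⟨v, h.right_mem⟩ : D)) :=
    tendsto_subtype_rng.2 hv
  exact hw ⟨_, tendsto_nhds_unique ((hfc.tendsto _).comp hv') hlim⟩

end WeakQS

/-- The factor by which a homeomorphism of a domain in a `c`-quasiconvex space onto one in a
`c'`-quasiconvex space, with weakly `H`-quasisymmetric inverse, distorts the relative scale
`dist x y / bdist D x`. The exponent is the number of steps of length `δ / (4 * c')` that are needed
to follow a curve of length `2 * c' * δ`, where `δ` is the distance of the starting point to the
boundary. -/
noncomputable def distortionConst (c c' H : ℝ) : ℝ := 2 * c * (1 + H) ^ ⌈8 * c' ^ 2⌉₊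

theorem WeakQS.bdist_lt_distortionConst_mul [CompleteSpace X] {f : D ≃ₜ D'} (hf : WeakQS H f)
    (hf' : WeakQS H' f.symm) (hH : 0 ≤ H) (hH' : 0 ≤ H') (hc : 0 ≤ c) (hX : QCSpace c X)
    (hY : QCSpace c' Y) (hD : IsOpen D) (hfr : (frontier D).Nonempty) (hD' : IsOpen D')
    (hfr' : (frontier D').Nonempty) {x y : D}
    (hxy : bdist D' (f x) < 2 * c' * dist (f x) (f y)) :
    bdist D x < distortionConst c c' H' * dist x y := by
  have hpos' := bdist_pos_s13 hD' hfr' (f x).2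
  have hc' : 0 ≤ c' := by
    by_contra! hneg
    nlinarith [dist_nonneg (x := f x) (y := f y)]
  obtain ⟨σ, L, w, hσ, hw, hσD, hL⟩ := hY.exists_curveIn_univ_notMem hc' hD' hfr' (f x).2
  have hLpos : 0 < L := by
    refine hσ.nonneg.lt_of_ne fun h0 => hw ?_
    rw [← hσ.target, ← h0, hσ.source]
    exact (f x).2
  have hfar := eventually_comap.1 (WeakQS.eventually_bdist_lt_of_notMem_range
    (f := fun z => (f z : Y)) hf hH (by fun_prop) hX hD hfr (w := w)
    (by rintro ⟨z, rfl⟩; exact hw (f z).2) x)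
  obtain ⟨t, hσt, ht⟩ :=
    (((hσ.tendsto_nhdsLT hLpos).eventually hfar).and (Ioo_mem_nhdsLT hLpos)).exists
  have h := hσ.restrict (E := D') le_rfl ht.1.le ht.2.le
    fun u hu => hσD u ⟨hu.1, hu.2.trans_lt ht.2⟩
  let q : D' := ⟨σ t, h.right_mem⟩
  have hxq : bdist D x < 2 * c * dist x (f.symm q) := hσt _ (by simp [q])
  have hqy : dist x (f.symm q) ≤ (1 + H') ^ ⌈8 * c' ^ 2⌉₊ * dist x y := by
    have hn : 2 * (t - 0) ≤ ⌈8 * c' ^ 2⌉₊ * dist (f x) (f y) := by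
      calc 2 * (t - 0) ≤ 4 * c' * bdist D' (f x) := by linarith [ht.2]
        _ ≤ 4 * c' * (2 * c' * dist (f x) (f y)) := by gcongr
        _ = 8 * c' ^ 2 * dist (f x) (f y) := by ring
        _ ≤ ⌈8 * c' ^ 2⌉₊ * dist (f x) (f y) := by
            gcongr
            exact Nat.le_ceil _
    rw [hσ.source] at h
    simpa using hf'.dist_le_of_curveIn hH' (q := q) h hn
  calc bdist D x < 2 * c * dist x (f.symm q) := hxq
    _ ≤ 2 * c * ((1 + H') ^ ⌈8 * c' ^ 2⌉₊ * dist x y) := by gcongr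
    _ = distortionConst c c' H' * dist x y := by rw [distortionConst]; ring

/-- The scale `r` such that points at quasihyperbolic distance less than `r` have images at
quasihyperbolic distance at most `1`. -/
noncomputable def qhScale (c c' H : ℝ) : ℝ := Real.log (1 + 1 / distortionConst c c' H)

theorem distortionConst_pos (hc : 0 < c) (hH : 0 ≤ H) : 0 < distortionConst c c' H := by
  unfold distortionConst
  positivity

theorem qhScale_pos (hc : 0 < c) (hH : 0 ≤ H) : 0 < qhScale c c' H :=
  Real.log_pos (lt_add_of_pos_right 1 (one_div_pos.2 (distortionConst_pos hc hH)))

theorem qhScale_le_one (hc : 1 ≤ c) (hH : 0 ≤ H) : qhScale c c' H ≤ 1 := by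
  have hpos : 0 < distortionConst c c' H := distortionConst_pos (by linarith) hH
  have hK : 1 ≤ distortionConst c c' H :=
    one_le_mul_of_one_le_of_one_le (by linarith) (one_le_pow₀ (by linarith))
  calc qhScale c c' H ≤ 1 + 1 / distortionConst c c' H - 1 :=
        Real.log_le_sub_one_of_pos (by positivity)
    _ = 1 / distortionConst c c' H := by ring
    _ ≤ 1 := (div_le_one hpos).2 hK

namespace WeakQS

theorem qhDist_le_one [CompleteSpace X] {f : D ≃ₜ D'} (hf : WeakQS H f) (hf' : WeakQS H' f.symm)
    (hH : 0 ≤ H) (hH' : 0 ≤ H') (hc : 0 < c) (hX : QCSpace c X) (hY : QCSpace c' Y)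
    (hD : IsProperDomain D) (hD' : IsOpen D') (hfr' : (frontier D').Nonempty) {x y : D}
    (hxy : qhDist D x y < qhScale c c' H') : qhDist D' (f x) (f y) ≤ 1 := by
  have hfr := hX.frontier_nonempty hD.2.1.nonempty hD.2.2
  have hpos := bdist_pos_s13 hD.1 hfr x.2
  have hpos' := bdist_pos_s13 hD' hfr' (f x).2
  have hK := distortionConst_pos (c' := c') hc hH'
  have hrel : dist (x : X) y / bdist D x < 1 / distortionConst c c' H' := by
    have hlog := (hX.log_one_add_dist_div_bdist_le_qhDist hD x.2 y.2).trans_lt hxy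
    linarith [(Real.log_lt_log_iff (by positivity) (by positivity)).1 hlog]
  have hclose : 2 * c' * dist (f x) (f y) ≤ bdist D' (f x) := by
    by_contra! hfar
    have := hf.bdist_lt_distortionConst_mul hf' hH hH' hc.le hX hY hD.1 hfr hD' hfr' hfar
    rw [div_lt_div_iff₀ hpos hK, one_mul, mul_comm] at hrel
    exact lt_asymm hrel this
  rw [Subtype.dist_eq] at hclose
  refine (hY.qhDist_le_div hD' hfr' (f x).2 (by linarith)).trans ?_
  rw [div_le_one (by linarith)]
  linarith

theorem qhDist_le_s13 [CompleteSpace X] {f : D ≃ₜ D'} (hf : WeakQS H f) (hf' : WeakQS H' f.symm)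
    (hH : 0 ≤ H) (hH' : 0 ≤ H') (hc : 0 < c) (hX : QCSpace c X) (hY : QCSpace c' Y)
    (hD : IsProperDomain D) (hD' : IsProperDomain D') (x y : D) :
    qhDist D' (f x) (f y) ≤ 1 / qhScale c c' H' * qhDist D x y + 1 := by
  have hfr' := hY.frontier_nonempty hD'.2.1.nonempty hD'.2.2
  rw [one_div_mul_eq_div]
  exact hX.le_qhDist_div_add_one hD (ρ := fun x y => qhDist D' (f x) (f y))
    (fun x y z => hY.qhDist_triangle hD' (f x).2 (f y).2 (f z).2) (qhScale_pos hc hH')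
    (fun x y => hf.qhDist_le_one hf' hH hH' hc hX hY hD hD'.1 hfr') x y

theorem cqh [CompleteSpace X] [CompleteSpace Y] {f : D ≃ₜ D'} (hf : WeakQS H f)
    (hf' : WeakQS H f.symm) (hH : 0 ≤ H) (hc : 0 < c) (hX : QCSpace c X) (hY : QCSpace c Y)
    (hD : IsProperDomain D) (hD' : IsProperDomain D') : CQH (1 / qhScale c c H) 1 f := by
  refine fun x y => ⟨?_, hf.qhDist_le_s13 hf' hH hH hc hX hY hD hD' x y⟩
  have hinv := WeakQS.qhDist_le_s13 hf' hf hH hH hc hY hX hD' hD (f x) (f y)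
  rw [f.symm_apply_apply, f.symm_apply_apply] at hinv
  rw [div_le_iff₀ (one_div_pos.2 (qhScale_pos hc hH))]
  linarith

end WeakQS

end WeakQuasisymmetry

section Restriction

variable {X Y : Type*} [MetricSpace X] [MetricSpace Y] {H : ℝ} {G D : Set X} {G' : Set Y}

theorem imSet_subset (f : G ≃ₜ G') (D : Set X) : imSet f D ⊆ G' := by
  rintro _ ⟨z, -, rfl⟩
  exact z.2

/-- The restriction of a homeomorphism `f : G ≃ₜ G'` to a homeomorphism of `D ⊆ G` onto its
image. -/
def restrictImSet (f : G ≃ₜ G') (hD : D ⊆ G) : D ≃ₜ imSet f D where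
  toFun x := ⟨f ⟨x, hD x.2⟩, ⟨_, ⟨⟨x, hD x.2⟩, x.2, rfl⟩, rfl⟩⟩
  invFun y := ⟨f.symm ⟨y, imSet_subset f D y.2⟩, by
    obtain ⟨_, _, ⟨z, hz, rfl⟩, rfl⟩ := y
    simpa using hz⟩
  left_inv x := by simp
  right_inv y := by simp

theorem isProperDomain_imSet {f : G ≃ₜ G'} (hG' : IsOpen G') (hne : G' ≠ univ) (hDG : D ⊆ G)
    (hD : IsDomainSet D) : IsProperDomain (imSet f D) := by
  refine ⟨?_, ?_, fun h => hne (univ_subset_iff.1 (h ▸ imSet_subset f D))⟩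
  · exact hG'.isOpenMap_subtype_val _ (f.isOpenMap _ (hD.1.preimage continuous_subtype_val))
  · have := isConnected_iff_connectedSpace.1 hD.2
    exact isConnected_iff_connectedSpace.2
      ((restrictImSet f hDG).surjective.connectedSpace (restrictImSet f hDG).continuous)

end Restriction

theorem stmt13_general {X Y : Type*} [MetricSpace X] [MetricSpace Y] [CompleteSpace X]
    [CompleteSpace Y] {c H : ℝ} (hc : 0 < c) (hH : 0 ≤ H) (hX : QCSpace c X) (hY : QCSpace c Y)
    {G : Set X} {G' : Set Y} (hG : G ≠ univ) (hG' : IsOpen G') (hne : G' ≠ univ) {f : G ≃ₜ G'}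
    (hf : WeakQS H f) (hf' : WeakQS H f.symm) {D : Set X} (hD : D ⊆ G) (hdom : IsDomainSet D) :
    CQH (1 / qhScale c c H) 1 (restrictImSet f hD) :=
  WeakQS.cqh (fun x a b => hf ⟨x, hD x.2⟩ ⟨a, hD a.2⟩ ⟨b, hD b.2⟩)
    (fun x a b => hf' ⟨x, imSet_subset f D x.2⟩ ⟨a, imSet_subset f D a.2⟩
      ⟨b, imSet_subset f D b.2⟩)
    hH hc hX hY
    ⟨hdom.1, hdom.2, fun h => hG (univ_subset_iff.1 (h ▸ hD))⟩
    (isProperDomain_imSet hG' hne hD hdom)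

/-- Lemma 7(2): If `X, Y` are `c`-quasiconvex complete metric
spaces, `G ⊊ X`, `G' ⊊ Y` domains and both `f : G → G'` and `f⁻¹` are weakly
`H`-quasisymmetric, then `f` is fully `(M,C)`-CQH with `M = M(c,H) ≥ 1`,
`C = C(c,H) ≥ 0`: for every subdomain `D ⊆ G` and all `x, y ∈ D`,
`(k_D(x,y) − C)/M ≤ k_{f(D)}(f(x),f(y)) ≤ M·k_D(x,y) + C`. -/
theorem stmt13 (c H : ℝ) (hc : 1 ≤ c) (hH : 1 ≤ H) :
    ∃ M C : ℝ, 1 ≤ M ∧ 0 ≤ C ∧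
      ∀ (X Y : Type) [MetricSpace X] [MetricSpace Y]
        [CompleteSpace X] [CompleteSpace Y], QCSpace c X → QCSpace c Y →
        ∀ (G : Set X) (G' : Set Y), IsProperDomain G → IsProperDomain G' →
          ∀ f : ↥G ≃ₜ ↥G', WeakQS H (⇑f) → WeakQS H (⇑f.symm) →
            ∀ D : Set X, ∀ hD : D ⊆ G, IsDomainSet D →
              ∀ x : X, ∀ hx : x ∈ D, ∀ y : X, ∀ hy : y ∈ D,
                (qhDist D x y - C) / M ≤
                    qhDist (imSet f D) ↑(f ⟨x, hD hx⟩) ↑(f ⟨y, hD hy⟩) ∧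
                  qhDist (imSet f D) ↑(f ⟨x, hD hx⟩) ↑(f ⟨y, hD hy⟩) ≤
                    M * qhDist D x y + C :=
  have hH0 : 0 ≤ H := zero_le_one.trans hH
  have hc0 : 0 < c := zero_lt_one.trans_le hc
  ⟨1 / qhScale c c H, 1, (one_le_div (qhScale_pos hc0 hH0)).2 (qhScale_le_one hc hH0), zero_le_one,
    fun _ _ _ _ _ _ hX hY _ _ hG hG' _ hf hf' _ hD hdom x hx y hy =>
      stmt13_general hc0 hH0 hX hY hG.2.2 hG'.1 hG'.2.2 hf hf' hD hdom ⟨x, hx⟩ ⟨y, hy⟩⟩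
end
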